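/- arXiv:2204.02628 — 7 statements merged into one kernel-verified Lean document; each statement's English description precedes it below -/
import Mathlib

section
/- Let M ≥ 2 be an integer, f : ℤ → ℂ a function with f(n+M) = f(n) for all n ∈ ℤ and ∑_{m=1}^{M} f(m) = 0, ν ∈ {0,1}, and b a positive real number. For each integer n ≥ 0 set C_n := (−1)^(n+1) · (M^(2n+ν)/(2n+ν+1)) · ∑_{m=1}^{M} f(m) · B_{2n+ν+1}(m/M), where B_j denotes the j-th Bernoulli polynomial. Then for every integer N ≥ 0 there exist δ > 0 and K > 0 such that for all real t with 0 < t < δ, |∑_{n=1}^∞ n^ν f(n) e^(−t n²/b) − ∑_{n=0}^{N} (C_n/(b^n n!)) t^n| ≤ K · t^(N+1). In other words, ∑_{n≥1} n^ν f(n) e^(−t n²/b) has the asymptotic expansion ∑_{n≥0} (C_n/(b^n n!)) t^n as t → 0⁺. -/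
/-!
Euler–Maclaurin summation with an `L¹` remainder. On `[0, 1]`, let `R_K[g]` be `g` minus its
Bernoulli expansion `∑_{k<K} (B_k(x)/k!) ∫₀¹ g⁽ᵏ⁾`. Then `R_{K+1}[g]' = R_K[g']` and `R_{K+1}[g]`
has mean zero, so `|R_{K+1}[g]| ≤ ∫₀¹ |R_K[g']|`, and inductively `|R_K[g]| ≤ ∫₀¹ |g⁽ᴷ⁾|`. Adding
this up over the translates `[j, j+1]` expands `∑_j g(h(j+x))` as `h → 0` into `h⁻¹ ∫₀^∞ g` and
boundary terms `-h^k B_{k+1}(x)/(k+1)! g⁽ᵏ⁾(0)`, `k < K`, with an error `O(h^K)`. For a periodic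
`f`, split `∑ f(n) g(sn)` into residue classes modulo `M`, with `h = sM` and `x = m/M`: the
mean-zero condition cancels the integral, and the boundary terms combine to
`∑ L(-k, f) s^k g⁽ᵏ⁾(0)/k!`. It remains to take `g(x) = x^ν e^{-x²}` and `s = √(t/b)`.
-/

open MeasureTheory Set Filter
open scoped Nat

section Sums

variable {A : Type*} [AddCommMonoid A]

theorem sum_range_two_mul_add_eq_sum {F : ℕ → A} {ν : ℕ}
    (hF : ∀ k, (∀ n, k ≠ 2 * n + ν) → F k = 0) (L : ℕ) :
    ∑ k ∈ Finset.range (2 * L + ν), F k = ∑ n ∈ Finset.range L, F (2 * n + ν) := by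
  refine (Finset.sum_of_injOn (fun n ↦ 2 * n + ν) ?_ ?_ ?_ fun _ _ ↦ rfl).symm
  · intro m _ n _ h
    simpa using h
  · intro n hn
    simpa using hn
  · intro k hk hnot
    refine hF k fun n hn ↦ hnot ⟨n, ?_, hn.symm⟩
    grind

theorem hasSum_succ_of_forall_hasSum_mul_add [TopologicalSpace A] [ContinuousAdd A] {M : ℕ}
    (hM : 0 < M) {F a : ℕ → A}
    (hF : ∀ m ∈ Finset.Icc 1 M, HasSum (fun j ↦ F (j * M + m)) (a m)) :
    HasSum (fun n ↦ F (n + 1)) (∑ m ∈ Finset.Icc 1 M, a m) := by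
  have hclass : ∀ i ∈ Finset.range M,
      HasSum (fun n ↦ if n % M = i then F (n + 1) else 0) (a (1 + i)) := by
    intro i hi
    rw [Finset.mem_range] at hi
    have hinj : Function.Injective fun j ↦ j * M + i := fun j j' h ↦ by
      simpa [hM.ne'] using h
    rw [← hinj.hasSum_iff]
    · simpa [Function.comp_def, Nat.mod_eq_of_lt hi, add_assoc, add_comm i 1]
        using hF (1 + i) (by grind)
    · intro n hn
      refine if_neg fun h ↦ hn ⟨n / M, ?_⟩
      simpa [h] using Nat.div_add_mod' n M
  have hsum := hasSum_sum hclass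
  simp only [Finset.sum_ite_eq, Finset.mem_range, Nat.mod_lt _ hM, if_true] at hsum
  rwa [← Finset.Ico_add_one_right_eq_Icc, Finset.sum_Ico_eq_sum_range, Nat.add_sub_cancel]

end Sums

section Remainder

variable {E : Type*} [NormedAddCommGroup E] [NormedSpace ℝ E]

theorem norm_le_integral_norm_deriv_of_integral_eq_zero [CompleteSpace E] {r : ℝ → E}
    (hr : ContDiff ℝ 1 r) {a b : ℝ} (hab : a < b) (hmean : ∫ y in a..b, r y = 0)
    {x : ℝ} (hx : x ∈ Icc a b) :
    ‖r x‖ ≤ ∫ y in a..b, ‖deriv r y‖ := by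
  have hcont : Continuous (deriv r) := hr.continuous_deriv le_rfl
  have hosc : ∀ y ∈ Icc a b, ‖r x - r y‖ ≤ ∫ z in a..b, ‖deriv r z‖ := by
    intro y hy
    rw [← intervalIntegral.integral_deriv_eq_sub
      (fun z _ ↦ hr.differentiable one_ne_zero z) (hcont.intervalIntegrable _ _)]
    refine intervalIntegral.norm_integral_le_integral_norm_uIoc.trans ?_
    rw [intervalIntegral.integral_of_le hab.le]
    refine setIntegral_mono_set hcont.norm.integrableOn_Ioc
      (.of_forall fun _ ↦ norm_nonneg _) (Eventually.of_forall ?_)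
    exact Ioc_subset_Ioc (le_min hy.1 hx.1) (max_le hy.2 hx.2)
  have hmul : (b - a) • r x = ∫ y in a..b, (r x - r y) := by
    rw [intervalIntegral.integral_sub intervalIntegrable_const
      (hr.continuous.intervalIntegrable _ _), hmean, sub_zero, intervalIntegral.integral_const]
  have hbound : ‖∫ y in a..b, (r x - r y)‖ ≤ (∫ z in a..b, ‖deriv r z‖) * |b - a| :=
    intervalIntegral.norm_integral_le_of_norm_le_const fun y hy ↦
      hosc y (Ioc_subset_Icc_self (uIoc_of_le hab.le ▸ hy))
  rw [← hmul, norm_smul, Real.norm_eq_abs, mul_comm] at hbound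
  exact le_of_mul_le_mul_right hbound (abs_pos.2 (sub_pos.2 hab).ne')

/-- The remainder at `x` of the Euler–Maclaurin expansion of `g` on `[0, 1]`, in which the terms of
order `k < K` are the Bernoulli polynomials weighted by the means of the derivatives of `g`. -/
noncomputable def bernoulliRemainder (g : ℝ → E) (K : ℕ) (x : ℝ) : E :=
  g x - ∑ k ∈ Finset.range K, (bernoulliFun k x / k !) • ∫ y in (0 : ℝ)..1, iteratedDeriv k g y

theorem deriv_bernoulliRemainder_succ {g : ℝ → E} (hg : Differentiable ℝ g) (K : ℕ) :
    deriv (bernoulliRemainder g (K + 1)) = bernoulliRemainder (deriv g) K := by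
  funext x
  have hterm (k : ℕ) : HasDerivAt (fun y ↦ bernoulliFun (k + 1) y / (k + 1)!)
      (bernoulliFun k x / k !) x := by
    convert! (antideriv_bernoulliFun k x).div_const (k ! : ℝ) using 2
    rw [Nat.factorial_succ, Nat.cast_mul, Nat.cast_succ, div_div]
  have hsum := HasDerivAt.fun_sum fun k (_ : k ∈ Finset.range K) ↦
    (hterm k).smul_const (∫ y in (0 : ℝ)..1, iteratedDeriv (k + 1) g y)
  refine HasDerivAt.deriv ?_
  convert! ((hg x).hasDerivAt.sub hsum).sub_const (∫ y in (0 : ℝ)..1, g y) using 1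
  · funext y
    simp [bernoulliRemainder, Finset.sum_range_succ', sub_sub]
  · simp only [bernoulliRemainder, iteratedDeriv_succ']

theorem contDiff_bernoulliRemainder {g : ℝ → E} {n : WithTop ℕ∞} (hg : ContDiff ℝ n g) (K : ℕ) :
    ContDiff ℝ n (bernoulliRemainder g K) :=
  hg.sub <| ContDiff.sum fun k _ ↦
    (((contDiff_bernoulliFun k).of_le le_top).div_const _).smul contDiff_const

theorem integral_bernoulliRemainder_succ [CompleteSpace E] {g : ℝ → E} (hg : Continuous g)
    (K : ℕ) : ∫ x in (0 : ℝ)..1, bernoulliRemainder g (K + 1) x = 0 := by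
  have hint (k : ℕ) : IntervalIntegrable (fun x ↦ (bernoulliFun k x / k !) •
      ∫ y in (0 : ℝ)..1, iteratedDeriv k g y) volume 0 1 :=
    (((continuous_bernoulliFun k).div_const _).smul continuous_const).intervalIntegrable _ _
  simp only [bernoulliRemainder]
  rw [intervalIntegral.integral_sub (hg.intervalIntegrable _ _)
    (by simpa [Finset.sum_fn] using IntervalIntegrable.sum (Finset.range (K + 1)) fun k _ ↦ hint k),
    intervalIntegral.integral_finsetSum fun k _ ↦ hint k, Finset.sum_range_succ']
  simp [intervalIntegral.integral_smul_const, integral_bernoulliFun]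

theorem norm_bernoulliRemainder_succ_le_integral_deriv [CompleteSpace E] {g : ℝ → E}
    (hg : ContDiff ℝ 1 g) (K : ℕ) {x : ℝ} (hx : x ∈ Icc (0 : ℝ) 1) :
    ‖bernoulliRemainder g (K + 1) x‖ ≤ ∫ y in (0 : ℝ)..1, ‖bernoulliRemainder (deriv g) K y‖ := by
  rw [← deriv_bernoulliRemainder_succ (hg.differentiable one_ne_zero)]
  exact norm_le_integral_norm_deriv_of_integral_eq_zero (contDiff_bernoulliRemainder hg _)
    one_pos (integral_bernoulliRemainder_succ hg.continuous K) hx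

theorem norm_bernoulliRemainder_succ_le [CompleteSpace E] {K : ℕ} {g : ℝ → E}
    (hg : ContDiff ℝ (K + 1 : ℕ) g) {x : ℝ} (hx : x ∈ Icc (0 : ℝ) 1) :
    ‖bernoulliRemainder g (K + 1) x‖ ≤ ∫ y in (0 : ℝ)..1, ‖iteratedDeriv (K + 1) g y‖ := by
  induction K generalizing g x with
  | zero =>
    simpa [bernoulliRemainder] using norm_bernoulliRemainder_succ_le_integral_deriv hg 0 hx
  | succ K ih =>
    have hg' : ContDiff ℝ (K + 1 : ℕ) (deriv g) := hg.deriv'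
    calc ‖bernoulliRemainder g (K + 2) x‖
        ≤ ∫ y in (0 : ℝ)..1, ‖bernoulliRemainder (deriv g) (K + 1) y‖ :=
          norm_bernoulliRemainder_succ_le_integral_deriv (hg.of_le (by simp)) (K + 1) hx
      _ ≤ ∫ _ in (0 : ℝ)..1, ∫ y in (0 : ℝ)..1, ‖iteratedDeriv (K + 1) (deriv g) y‖ :=
          intervalIntegral.integral_mono_on zero_le_one
            ((contDiff_bernoulliRemainder hg' _).continuous.norm.intervalIntegrable _ _)
            intervalIntegrable_const fun y hy ↦ ih hg' hy
      _ = ∫ y in (0 : ℝ)..1, ‖iteratedDeriv (K + 2) g y‖ := by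
          simp [iteratedDeriv_succ' (n := K + 1)]

end Remainder

section HalfLine

variable {E : Type*} [NormedAddCommGroup E] [NormedSpace ℝ E]

theorem hasSum_intervalIntegral_natCast_add_one {g : ℝ → E} (hg : IntegrableOn g (Ioi 0)) :
    HasSum (fun j : ℕ ↦ ∫ y in (j : ℝ)..j + 1, g y) (∫ y in Ioi 0, g y) := by
  have hUnion : ⋃ j : ℕ, Ioc (j : ℝ) (j + 1) = Ioi 0 := by
    simpa using iUnion_Ioc_map_succ_eq_Ioi (f := ((↑) : ℕ → ℝ))
      (fun n ↦ Nat.mono_cast bot_le) (not_bddAbove_of_tendsto_atTop tendsto_natCast_atTop_atTop)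
  have hdisjoint : Pairwise (Function.onFun Disjoint fun j : ℕ ↦ Ioc (j : ℝ) (j + 1)) := by
    simpa using (Nat.mono_cast (α := ℝ)).pairwise_disjoint_on_Ioc_succ
  simp_rw [intervalIntegral.integral_of_le (le_add_of_nonneg_right (zero_le_one' ℝ))]
  rw [← hUnion] at hg ⊢
  exact hasSum_integral_iUnion (fun _ ↦ measurableSet_Ioc) hdisjoint hg

theorem bernoulliRemainder_comp_const_add (g : ℝ → E) (a : ℝ) (K : ℕ) (x : ℝ) :
    bernoulliRemainder (fun y ↦ g (a + y)) K x = g (a + x) -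
      ∑ k ∈ Finset.range K, (bernoulliFun k x / k !) • ∫ y in a..a + 1, iteratedDeriv k g y := by
  simp only [bernoulliRemainder, iteratedDeriv_comp_const_add]
  simp

theorem norm_sub_sum_bernoulliFun_smul_integral_le [CompleteSpace E] {K : ℕ} {g : ℝ → E}
    (hg : ContDiff ℝ (K + 1 : ℕ) g) (a : ℝ) {x : ℝ} (hx : x ∈ Icc (0 : ℝ) 1) :
    ‖g (a + x) - ∑ k ∈ Finset.range (K + 1),
      (bernoulliFun k x / k !) • ∫ y in a..a + 1, iteratedDeriv k g y‖ ≤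
      ∫ y in a..a + 1, ‖iteratedDeriv (K + 1) g y‖ := by
  have hshift : ContDiff ℝ (K + 1 : ℕ) fun y ↦ g (a + y) :=
    hg.comp (contDiff_const.add contDiff_id)
  rw [← bernoulliRemainder_comp_const_add]
  refine (norm_bernoulliRemainder_succ_le hshift hx).trans_eq ?_
  simp only [iteratedDeriv_comp_const_add]
  simpa using intervalIntegral.integral_comp_add_left
    (fun y ↦ ‖iteratedDeriv (K + 1) g y‖) (a := 0) (b := 1) a

theorem integral_Ioi_iteratedDeriv_succ [CompleteSpace E] {g : ℝ → E} {k : ℕ}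
    (hg : ContDiff ℝ (k + 1 : ℕ) g) {a : ℝ} (hk : IntegrableOn (iteratedDeriv k g) (Ioi a))
    (hk' : IntegrableOn (iteratedDeriv (k + 1) g) (Ioi a)) :
    ∫ y in Ioi a, iteratedDeriv (k + 1) g y = -iteratedDeriv k g a := by
  have hderiv (y : ℝ) : HasDerivAt (iteratedDeriv k g) (iteratedDeriv (k + 1) g y) y := by
    rw [iteratedDeriv_succ]
    exact (hg.differentiable_iteratedDeriv k (by exact_mod_cast k.lt_succ_self) y).hasDerivAt
  rw [integral_Ioi_of_hasDerivAt_of_tendsto' (fun y _ ↦ hderiv y) hk'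
    (tendsto_zero_of_hasDerivAt_of_integrableOn_Ioi (fun y _ ↦ hderiv y) hk' hk), zero_sub]

theorem summable_natCast_add [CompleteSpace E] {g : ℝ → E} (hg : ContDiff ℝ 1 g)
    (hint : IntegrableOn g (Ioi 0)) (hint' : IntegrableOn (deriv g) (Ioi 0))
    {x : ℝ} (hx : x ∈ Icc (0 : ℝ) 1) : Summable fun j : ℕ ↦ g (j + x) := by
  have hdiff : Summable fun j : ℕ ↦ g (j + x) - ∫ y in (j : ℝ)..j + 1, g y :=
    Summable.of_norm_bounded (hasSum_intervalIntegral_natCast_add_one hint'.norm).summable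
      fun j ↦ by simpa using norm_sub_sum_bernoulliFun_smul_integral_le (K := 0) hg j hx
  simpa using hdiff.add (hasSum_intervalIntegral_natCast_add_one hint).summable

theorem norm_tsum_natCast_add_sub_sum_smul_integral_le [CompleteSpace E] {g : ℝ → E} {K : ℕ}
    (hg : ContDiff ℝ (K + 1 : ℕ) g)
    (hint : ∀ k ≤ K + 1, IntegrableOn (iteratedDeriv k g) (Ioi 0))
    {x : ℝ} (hx : x ∈ Icc (0 : ℝ) 1) :
    ‖∑' j : ℕ, g (j + x) - ∑ k ∈ Finset.range (K + 1),
      (bernoulliFun k x / k !) • ∫ y in Ioi 0, iteratedDeriv k g y‖ ≤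
      ∫ y in Ioi 0, ‖iteratedDeriv (K + 1) g y‖ := by
  have hsummable : Summable fun j : ℕ ↦ g (j + x) :=
    summable_natCast_add (hg.of_le (by simp)) (by simpa using hint 0) (by simpa using hint 1) hx
  have hsum := hasSum_sum fun k hk ↦ (hasSum_intervalIntegral_natCast_add_one
    (hint k (Finset.mem_range.1 hk).le)).const_smul (bernoulliFun k x / k !)
  rw [← (hsummable.hasSum.sub hsum).tsum_eq]
  exact tsum_of_norm_bounded (hasSum_intervalIntegral_natCast_add_one (hint _ le_rfl).norm)
    fun j ↦ norm_sub_sum_bernoulliFun_smul_integral_le hg j hx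

theorem norm_tsum_natCast_add_sub_integral_add_sum_le [CompleteSpace E] {g : ℝ → E} {K : ℕ}
    (hg : ContDiff ℝ (K + 1 : ℕ) g)
    (hint : ∀ k ≤ K + 1, IntegrableOn (iteratedDeriv k g) (Ioi 0))
    {x : ℝ} (hx : x ∈ Icc (0 : ℝ) 1) :
    ‖∑' j : ℕ, g (j + x) - (∫ y in Ioi 0, g y) + ∑ k ∈ Finset.range K,
      (bernoulliFun (k + 1) x / (k + 1)!) • iteratedDeriv k g 0‖ ≤
      ∫ y in Ioi 0, ‖iteratedDeriv (K + 1) g y‖ := by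
  refine (norm_tsum_natCast_add_sub_sum_smul_integral_le hg hint hx).trans_eq' (congrArg _ ?_)
  have hboundary : ∀ k ∈ Finset.range K, (bernoulliFun (k + 1) x / (k + 1)!) •
      ∫ y in Ioi 0, iteratedDeriv (k + 1) g y =
        -((bernoulliFun (k + 1) x / (k + 1)!) • iteratedDeriv k g 0) := by
    intro k hk
    rw [Finset.mem_range] at hk
    rw [integral_Ioi_iteratedDeriv_succ (hg.of_le (by exact_mod_cast Nat.succ_le_succ hk.le))
      (hint k (by omega)) (hint (k + 1) (by omega)), smul_neg]
  rw [Finset.sum_range_succ', Finset.sum_congr rfl hboundary, Finset.sum_neg_distrib]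
  simp only [bernoulliFun_zero, Nat.factorial_zero, Nat.cast_one, div_one, iteratedDeriv_zero,
    one_smul]
  abel

theorem iteratedDeriv_comp_const_mul_left {g : ℝ → E} {k : ℕ} (hg : ContDiff ℝ k g) (h : ℝ) :
    iteratedDeriv k (fun y ↦ g (h * y)) = fun y ↦ h ^ k • iteratedDeriv k g (h * y) :=
  iteratedDeriv_comp_const_smul hg h

theorem integrableOn_iteratedDeriv_comp_mul_left {g : ℝ → E} {k : ℕ} (hg : ContDiff ℝ k g)
    (hint : IntegrableOn (iteratedDeriv k g) (Ioi 0)) {h : ℝ} (hh : 0 < h) :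
    IntegrableOn (iteratedDeriv k fun y ↦ g (h * y)) (Ioi 0) := by
  rw [iteratedDeriv_comp_const_mul_left hg]
  refine Integrable.smul _ ((integrableOn_Ioi_comp_mul_left_iff _ 0 hh).2 ?_)
  rwa [mul_zero]

theorem summable_mul_natCast_add [CompleteSpace E] {g : ℝ → E} (hg : ContDiff ℝ 1 g)
    (hint : IntegrableOn g (Ioi 0)) (hint' : IntegrableOn (deriv g) (Ioi 0))
    {h : ℝ} (hh : 0 < h) {x : ℝ} (hx : x ∈ Icc (0 : ℝ) 1) :
    Summable fun j : ℕ ↦ g (h * (j + x)) := by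
  refine summable_natCast_add (g := fun y ↦ g (h * y)) (hg.comp (contDiff_const.mul contDiff_id))
    ?_ ?_ hx
  · exact (integrableOn_Ioi_comp_mul_left_iff g 0 hh).2 (by rwa [mul_zero])
  · simpa using integrableOn_iteratedDeriv_comp_mul_left (k := 1) hg (by simpa using hint') hh

theorem norm_tsum_mul_natCast_add_sub_integral_add_sum_le [CompleteSpace E] {g : ℝ → E} {K : ℕ}
    (hg : ContDiff ℝ (K + 1 : ℕ) g)
    (hint : ∀ k ≤ K + 1, IntegrableOn (iteratedDeriv k g) (Ioi 0))
    {h : ℝ} (hh : 0 < h) {x : ℝ} (hx : x ∈ Icc (0 : ℝ) 1) :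
    ‖∑' j : ℕ, g (h * (j + x)) - h⁻¹ • (∫ y in Ioi 0, g y) + ∑ k ∈ Finset.range K,
      (h ^ k * (bernoulliFun (k + 1) x / (k + 1)!)) • iteratedDeriv k g 0‖ ≤
      h ^ K * ∫ y in Ioi 0, ‖iteratedDeriv (K + 1) g y‖ := by
  have hg_le {k : ℕ} (hk : k ≤ K + 1) : ContDiff ℝ k g := hg.of_le (by exact_mod_cast hk)
  have hscaled := norm_tsum_natCast_add_sub_integral_add_sum_le (g := fun y ↦ g (h * y)) (K := K)
    (hg.comp (contDiff_const.mul contDiff_id))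
    (fun k hk ↦ integrableOn_iteratedDeriv_comp_mul_left (hg_le hk) (hint k hk) hh) hx
  have hboundary : ∀ k ∈ Finset.range K, (bernoulliFun (k + 1) x / (k + 1)!) •
      iteratedDeriv k (fun y ↦ g (h * y)) 0 =
        (h ^ k * (bernoulliFun (k + 1) x / (k + 1)!)) • iteratedDeriv k g 0 := by
    intro k hk
    have hk_le : k ≤ K + 1 := (Finset.mem_range_le hk).trans K.le_succ
    simp only [iteratedDeriv_comp_const_mul_left (hg_le hk_le), mul_zero, smul_smul, mul_comm]
  have hremainder : ∫ y in Ioi 0, ‖iteratedDeriv (K + 1) (fun y ↦ g (h * y)) y‖ =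
      h ^ K * ∫ y in Ioi 0, ‖iteratedDeriv (K + 1) g y‖ := by
    simp only [iteratedDeriv_comp_const_mul_left hg, norm_smul, norm_pow, Real.norm_of_nonneg hh.le]
    rw [integral_const_mul,
      integral_comp_mul_left_Ioi (fun y ↦ ‖iteratedDeriv (K + 1) g y‖) 0 hh, mul_zero, smul_eq_mul,
      ← mul_assoc, pow_succ, mul_inv_cancel_right₀ hh.ne']
  rwa [integral_comp_mul_left_Ioi g 0 hh, mul_zero, Finset.sum_congr rfl hboundary,
    hremainder] at hscaled

end HalfLine

section Periodic

variable {E : Type*} [NormedAddCommGroup E] [NormedSpace ℝ E]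

/-- The value `L(-k, f)` of the analytic continuation of `∑ f(n) n⁻ˢ` for an `M`-periodic `f`, given
in closed form by its Hurwitz-zeta decomposition over the residue classes modulo `M`. -/
noncomputable def lValueNeg (M : ℕ) (f : ℤ → E) (k : ℕ) : E :=
  -((M : ℝ) ^ k / (k + 1)) • ∑ m ∈ Finset.Icc 1 M, bernoulliFun (k + 1) (m / M) • f m

theorem smul_lValueNeg_eq_neg_sum (M : ℕ) (f : ℤ → E) (k : ℕ) (s c : ℝ) :
    (s ^ k * c / k !) • lValueNeg M f k = -∑ m ∈ Finset.Icc 1 M,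
      ((s * M) ^ k * (bernoulliFun (k + 1) (m / M) / (k + 1)!) * c) • f m := by
  rw [lValueNeg, smul_smul, Finset.smul_sum, ← Finset.sum_neg_distrib]
  refine Finset.sum_congr rfl fun m _ ↦ ?_
  rw [smul_smul, ← neg_smul, Nat.factorial_succ]
  congr 1
  push_cast
  field_simp
  ring

theorem hasSum_smul_of_periodic {M : ℕ} (hM : 0 < M) {f : ℤ → E}
    (hf : Function.Periodic f M) {G : ℝ → ℝ} {s : ℝ}
    (hG : ∀ x ∈ Icc (0 : ℝ) 1, Summable fun j : ℕ ↦ G (s * M * (j + x))) :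
    HasSum (fun n : ℕ ↦ G (s * (n + 1)) • f (n + 1))
      (∑ m ∈ Finset.Icc 1 M, (∑' j : ℕ, G (s * M * (j + m / M))) • f m) := by
  have hM' : (M : ℝ) ≠ 0 := by exact_mod_cast hM.ne'
  have hresidue : ∀ m ∈ Finset.Icc 1 M, HasSum (fun j : ℕ ↦
      G (s * (j * M + m : ℕ)) • f (j * M + m : ℕ))
      ((∑' j : ℕ, G (s * M * (j + m / M))) • f m) := by
    intro m hm
    have hm_mem : (m / M : ℝ) ∈ Icc (0 : ℝ) 1 := unitInterval.div_mem m.cast_nonneg M.cast_nonneg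
      (by exact_mod_cast (Finset.mem_Icc.1 hm).2)
    convert (hG _ hm_mem).hasSum.smul_const (f m) using 3 with j
    · push_cast
      field_simp
    · push_cast
      rw [add_comm]
      exact_mod_cast hf.nat_mul j m
  simpa using hasSum_succ_of_forall_hasSum_mul_add hM
    (F := fun n ↦ G (s * n) • f n) hresidue

theorem norm_tsum_smul_sub_sum_lValueNeg_le {M : ℕ} (hM : 0 < M) {f : ℤ → E}
    (hf : Function.Periodic f M) (hmean : ∑ m ∈ Finset.Icc 1 M, f m = 0)
    {G : ℝ → ℝ} {K : ℕ} (hG : ContDiff ℝ (K + 1 : ℕ) G)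
    (hint : ∀ k ≤ K + 1, IntegrableOn (iteratedDeriv k G) (Ioi 0)) {s : ℝ} (hs : 0 < s) :
    ‖∑' n : ℕ, G (s * (n + 1)) • f (n + 1) -
      ∑ k ∈ Finset.range K, (s ^ k * iteratedDeriv k G 0 / k !) • lValueNeg M f k‖ ≤
      (s * M) ^ K * (∫ y in Ioi 0, ‖iteratedDeriv (K + 1) G y‖) *
        ∑ m ∈ Finset.Icc 1 M, ‖f m‖ := by
  have hsM : 0 < s * M := by positivity
  have hsummable (x : ℝ) (hx : x ∈ Icc (0 : ℝ) 1) :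
      Summable fun j : ℕ ↦ G (s * M * (j + x)) :=
    summable_mul_natCast_add (hG.of_le (by simp)) (by simpa using hint 0) (by simpa using hint 1)
      hsM hx
  have hsplit : ∑' n : ℕ, G (s * (n + 1)) • f (n + 1) -
      ∑ k ∈ Finset.range K, (s ^ k * iteratedDeriv k G 0 / k !) • lValueNeg M f k =
      ∑ m ∈ Finset.Icc 1 M, (∑' j : ℕ, G (s * M * (j + m / M)) -
        (s * M)⁻¹ • (∫ y in Ioi 0, G y) + ∑ k ∈ Finset.range K,
        ((s * M) ^ k * (bernoulliFun (k + 1) (m / M) / (k + 1)!)) • iteratedDeriv k G 0) • f m := by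
    simp only [(hasSum_smul_of_periodic hM hf hsummable).tsum_eq, smul_lValueNeg_eq_neg_sum,
      add_smul, sub_smul, Finset.sum_add_distrib, Finset.sum_sub_distrib, ← Finset.smul_sum, hmean,
      Finset.sum_neg_distrib, sub_neg_eq_add, smul_zero, sub_zero, Finset.sum_smul, smul_eq_mul]
    rw [Finset.sum_comm]
  rw [hsplit, Finset.mul_sum]
  refine norm_sum_le_of_le _ fun m hm ↦ ?_
  rw [norm_smul]
  gcongr
  have hm_mem : (m / M : ℝ) ∈ Icc (0 : ℝ) 1 := unitInterval.div_mem m.cast_nonneg M.cast_nonneg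
    (by exact_mod_cast (Finset.mem_Icc.1 hm).2)
  exact norm_tsum_mul_natCast_add_sub_integral_add_sum_le hG hint hsM hm_mem

end Periodic

section Gaussian

/-- The profile `x ^ ν * exp (-x ^ 2)`, whose samples at the points `s * n` are, up to the factor
`s ^ ν`, the weights of the partial theta series at `t = b * s ^ 2`. -/
noncomputable def gaussianMonomial (ν : ℕ) (x : ℝ) : ℝ :=
  x ^ ν * Real.exp (-x ^ 2)

theorem contDiff_gaussianMonomial (ν : ℕ) {n : WithTop ℕ∞} :
    ContDiff ℝ n (gaussianMonomial ν) := by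
  unfold gaussianMonomial
  fun_prop

theorem deriv_gaussianMonomial (ν : ℕ) :
    deriv (gaussianMonomial ν) =
      (ν : ℝ) • gaussianMonomial (ν - 1) - (2 : ℝ) • gaussianMonomial (ν + 1) := by
  funext x
  refine HasDerivAt.deriv ?_
  convert! (hasDerivAt_pow ν x).mul ((hasDerivAt_pow 2 x).neg.exp) using 1
  simp only [gaussianMonomial, Pi.sub_apply, Pi.smul_apply, Pi.neg_apply, smul_eq_mul]
  push_cast
  ring

theorem iteratedDeriv_succ_gaussianMonomial (k ν : ℕ) :
    iteratedDeriv (k + 1) (gaussianMonomial ν) =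
      (ν : ℝ) • iteratedDeriv k (gaussianMonomial (ν - 1)) -
        (2 : ℝ) • iteratedDeriv k (gaussianMonomial (ν + 1)) := by
  have hsmooth (c : ℝ) (μ : ℕ) (x : ℝ) : ContDiffAt ℝ k (c • gaussianMonomial μ) x :=
    ((contDiff_gaussianMonomial μ).const_smul c).contDiffAt
  funext x
  simp only [iteratedDeriv_succ', deriv_gaussianMonomial,
    iteratedDeriv_sub (hsmooth _ _ x) (hsmooth _ _ x), iteratedDeriv_const_smul_field,
    Pi.sub_apply, Pi.smul_apply]

theorem integrable_iteratedDeriv_gaussianMonomial (k ν : ℕ) :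
    Integrable (iteratedDeriv k (gaussianMonomial ν)) := by
  induction k generalizing ν with
  | zero =>
    have hν : (-1 : ℝ) < ν := by linarith [ν.cast_nonneg (α := ℝ)]
    simpa [gaussianMonomial] using! integrable_rpow_mul_exp_neg_mul_sq one_pos hν
  | succ k ih =>
    rw [iteratedDeriv_succ_gaussianMonomial]
    exact ((ih _).smul _).sub ((ih _).smul _)

theorem iteratedDeriv_gaussianMonomial_zero_of_forall_ne {k ν : ℕ} (hk : ∀ n, k ≠ 2 * n + ν) :
    iteratedDeriv k (gaussianMonomial ν) 0 = 0 := by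
  induction k generalizing ν with
  | zero =>
    have hν : ν ≠ 0 := by simpa [eq_comm] using hk 0
    simp [gaussianMonomial, hν]
  | succ k ih =>
    have hlower : (ν : ℝ) * iteratedDeriv k (gaussianMonomial (ν - 1)) 0 = 0 := by
      rcases ν with - | ν
      · simp
      · rw [ih fun n ↦ by grind, mul_zero]
    have hupper : iteratedDeriv k (gaussianMonomial (ν + 1)) 0 = 0 :=
      ih fun n hn ↦ hk (n + 1) (by omega)
    simp [iteratedDeriv_succ_gaussianMonomial, hlower, hupper]

theorem iteratedDeriv_gaussianMonomial_zero (n ν : ℕ) :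
    iteratedDeriv (2 * n + ν) (gaussianMonomial ν) 0 = (-1) ^ n * (2 * n + ν)! / n ! := by
  suffices h : ∀ k n ν, k = 2 * n + ν →
      iteratedDeriv k (gaussianMonomial ν) 0 = (-1) ^ n * k ! / n ! from h _ n ν rfl
  intro k
  induction k with
  | zero =>
    rintro n ν h
    obtain ⟨rfl, rfl⟩ : n = 0 ∧ ν = 0 := by omega
    simp [gaussianMonomial]
  | succ k ih =>
    rintro n (- | ν) h <;> rw [iteratedDeriv_succ_gaussianMonomial]
    · obtain ⟨n, rfl⟩ : ∃ n', n = n' + 1 := ⟨n - 1, by omega⟩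
      have hk : (k : ℝ) = 2 * n + 1 := by exact_mod_cast (by omega : k = 2 * n + 1)
      simp only [Pi.sub_apply, Pi.smul_apply, smul_eq_mul, ih n 1 (by omega), Nat.factorial_succ]
      push_cast [hk]
      field_simp
      ring
    · rcases n with - | n
      · obtain rfl : k = ν := by omega
        simp [ih 0 k (by omega), Nat.factorial_succ,
          iteratedDeriv_gaussianMonomial_zero_of_forall_ne (k := k) (ν := k + 2) (by omega)]
      · have hk : (k : ℝ) = 2 * (n + 1) + ν := by exact_mod_cast (by omega : k = 2 * (n + 1) + ν)
        simp only [Pi.sub_apply, Pi.smul_apply, smul_eq_mul, Nat.add_sub_cancel,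
          ih (n + 1) ν (by omega), ih n (ν + 1 + 1) (by omega), Nat.factorial_succ]
        push_cast [hk]
        field_simp
        ring

end Gaussian

section Theta

variable {E : Type*} [NormedAddCommGroup E] [NormedSpace ℝ E]

theorem norm_tsum_gaussian_sub_sum_lValueNeg_le {M : ℕ} (hM : 0 < M) {f : ℤ → E}
    (hf : Function.Periodic f M) (hmean : ∑ m ∈ Finset.Icc 1 M, f m = 0) (ν L : ℕ)
    {s : ℝ} (hs : 0 < s) :
    ‖∑' n : ℕ, ((n + 1 : ℝ) ^ ν * Real.exp (-(s * (n + 1)) ^ 2)) • f (n + 1) -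
      ∑ n ∈ Finset.range L, ((-1) ^ n * (s ^ 2) ^ n / n !) • lValueNeg M f (2 * n + ν)‖ ≤
      (M ^ (2 * L + ν) * (∫ y in Ioi 0, ‖iteratedDeriv (2 * L + ν + 1) (gaussianMonomial ν) y‖) *
        ∑ m ∈ Finset.Icc 1 M, ‖f m‖) * (s ^ 2) ^ L := by
  have hbound := norm_tsum_smul_sub_sum_lValueNeg_le hM hf hmean (K := 2 * L + ν)
    (contDiff_gaussianMonomial ν)
    (fun k _ ↦ (integrable_iteratedDeriv_gaussianMonomial k ν).integrableOn) hs
  have hterm (n : ℕ) : gaussianMonomial ν (s * (n + 1)) • f (n + 1) =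
      s ^ ν • ((n + 1 : ℝ) ^ ν * Real.exp (-(s * (n + 1)) ^ 2)) • f (n + 1) := by
    rw [gaussianMonomial, mul_pow, mul_assoc, mul_smul]
  have hcoeff (n : ℕ) : (s ^ (2 * n + ν) *
      iteratedDeriv (2 * n + ν) (gaussianMonomial ν) 0 / (2 * n + ν)!) • lValueNeg M f (2 * n + ν) =
      s ^ ν • ((-1) ^ n * (s ^ 2) ^ n / n !) • lValueNeg M f (2 * n + ν) := by
    rw [iteratedDeriv_gaussianMonomial_zero, smul_smul]
    congr 1
    field_simp
    ring
  rw [sum_range_two_mul_add_eq_sum fun k hk ↦ by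
    simp [iteratedDeriv_gaussianMonomial_zero_of_forall_ne hk]] at hbound
  simp only [hterm, hcoeff, tsum_const_smul'', ← Finset.smul_sum, ← smul_sub, norm_smul, norm_pow,
    Real.norm_of_nonneg hs.le] at hbound
  refine le_of_mul_le_mul_left (hbound.trans_eq ?_) (pow_pos hs ν)
  ring

theorem bernoulliFun_ratCast (k : ℕ) (q : ℚ) :
    bernoulliFun k q = ((Polynomial.bernoulli k).eval q : ℚ) := by
  simpa [bernoulliFun] using (Polynomial.bernoulli k).eval_map_apply (algebraMap ℚ ℝ) q

theorem lValueNeg_eq_mul_sum_eval_bernoulli (M : ℕ) (f : ℤ → ℂ) (k : ℕ) :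
    lValueNeg M f k = -((M : ℂ) ^ k / (k + 1)) * ∑ m ∈ Finset.Icc 1 M,
      f m * ((Polynomial.bernoulli (k + 1)).eval ((m : ℚ) / M) : ℚ) := by
  have hbernoulli (m : ℕ) : bernoulliFun (k + 1) (m / M) =
      ((Polynomial.bernoulli (k + 1)).eval ((m : ℚ) / M) : ℚ) := by
    simpa using bernoulliFun_ratCast (k + 1) (m / M)
  simp [lValueNeg, hbernoulli, mul_comm (f _)]

theorem smul_lValueNeg_eq_mul_sum_eval_bernoulli (M : ℕ) (f : ℤ → ℂ) (ν n : ℕ) (t b : ℝ) :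
    ((-1) ^ n * (t / b) ^ n / n ! : ℝ) • lValueNeg M f (2 * n + ν) =
      (-1) ^ (n + 1) * ((M : ℂ) ^ (2 * n + ν) / (2 * n + ν + 1)) * (∑ m ∈ Finset.Icc 1 M,
        f m * ((Polynomial.bernoulli (2 * n + ν + 1)).eval ((m : ℚ) / M) : ℚ)) /
          ((b : ℂ) ^ n * n !) * (t : ℂ) ^ n := by
  rw [lValueNeg_eq_mul_sum_eval_bernoulli, Complex.real_smul]
  push_cast
  ring

theorem pow_mul_exp_smul_eq_mul_mul_cexp (x y : ℝ) (ν : ℕ) (z : ℂ) :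
    (x ^ ν * Real.exp y) • z = (x : ℂ) ^ ν * z * Complex.exp y := by
  rw [Complex.real_smul]
  push_cast
  ring

theorem partial_theta_asymptotic_expansion_general {M : ℕ} (hM : 0 < M) {f : ℤ → E}
    (hf : Function.Periodic f M) (hmean : ∑ m ∈ Finset.Icc 1 M, f m = 0) (ν : ℕ)
    {b : ℝ} (hb : 0 < b) (N : ℕ) :
    ∃ K > 0, ∀ t : ℝ, 0 < t →
      ‖∑' n : ℕ, ((n + 1 : ℝ) ^ ν * Real.exp (-(t * (n + 1) ^ 2 / b))) • f (n + 1) -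
        ∑ n ∈ Finset.range (N + 1),
          ((-1) ^ n * (t / b) ^ n / n !) • lValueNeg M f (2 * n + ν)‖ ≤ K * t ^ (N + 1) := by
  have hmain (t : ℝ) (ht : 0 < t) := norm_tsum_gaussian_sub_sum_lValueNeg_le hM hf hmean ν (N + 1)
    (Real.sqrt_pos.2 (div_pos ht hb))
  set A := M ^ (2 * (N + 1) + ν) *
    (∫ y in Ioi 0, ‖iteratedDeriv (2 * (N + 1) + ν + 1) (gaussianMonomial ν) y‖) *
      ∑ m ∈ Finset.Icc 1 M, ‖f m‖
  refine ⟨A / b ^ (N + 1) + 1, by positivity, fun t ht ↦ ?_⟩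
  have ht' := hmain t ht
  simp only [mul_pow, Real.sq_sqrt (div_pos ht hb).le, div_mul_eq_mul_div] at ht'
  calc _ ≤ A * (t / b) ^ (N + 1) := ht'
    _ = A / b ^ (N + 1) * t ^ (N + 1) := by rw [div_pow, mul_div_left_comm, mul_comm]
    _ ≤ (A / b ^ (N + 1) + 1) * t ^ (N + 1) := by gcongr; exact le_add_of_nonneg_right zero_le_one

end Theta

/-- Let `f : ℤ → ℂ` be periodic of period `M ≥ 2` with mean zero,
`ν ∈ {0,1}` and `b > 0`.  With
`C_n = (−1)^(n+1) (M^(2n+ν)/(2n+ν+1)) ∑_{m=1}^M f(m) B_{2n+ν+1}(m/M)`,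
the partial theta series `∑_{n≥1} n^ν f(n) e^{−t n²/b}` has the asymptotic expansion
`∑_{n≥0} (C_n/(b^n n!)) t^n` as `t → 0⁺`. -/
theorem partial_theta_asymptotic_expansion (M : ℕ) (hM : 2 ≤ M) (f : ℤ → ℂ)
    (hf : ∀ n : ℤ, f (n + M) = f n) (hmean : ∑ m ∈ Finset.Icc 1 M, f (m : ℤ) = 0)
    (ν : ℕ) (hν : ν = 0 ∨ ν = 1) (b : ℝ) (hb : 0 < b)
    (C : ℕ → ℂ)
    (hC : ∀ n : ℕ, C n = (-1) ^ (n + 1) * ((M : ℂ) ^ (2 * n + ν) / (2 * n + ν + 1)) *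
      ∑ m ∈ Finset.Icc 1 M,
        f (m : ℤ) *
          (((Polynomial.bernoulli (2 * n + ν + 1)).eval ((m : ℚ) / (M : ℚ)) : ℚ) : ℂ)) :
    ∀ N : ℕ, ∃ δ > (0 : ℝ), ∃ K > (0 : ℝ), ∀ t : ℝ, 0 < t → t < δ →
      ‖(∑' n : ℕ, ((n : ℂ) + 1) ^ ν * f ((n : ℤ) + 1) *
            Complex.exp (-((t * ((n : ℝ) + 1) ^ 2 / b : ℝ) : ℂ))) -
          ∑ n ∈ Finset.range (N + 1),
            C n / ((b : ℂ) ^ n * (n.factorial : ℂ)) * (t : ℂ) ^ n‖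
        ≤ K * t ^ (N + 1) := by
  intro N
  obtain ⟨K, hK, hbound⟩ :=
    partial_theta_asymptotic_expansion_general (by omega) hf hmean ν hb N
  refine ⟨1, one_pos, K, hK, fun t ht _ ↦ ?_⟩
  simpa only [hC, smul_lValueNeg_eq_mul_sum_eval_bernoulli, pow_mul_exp_smul_eq_mul_mul_cexp,
    Complex.ofReal_add, Complex.ofReal_natCast, Complex.ofReal_one, Complex.ofReal_neg]
    using hbound t ht
end

section
/- Let M ≥ 2 be an integer, f : ℤ → ℝ a function with f(n+M) = f(n) for all n ∈ ℤ, and ν ∈ {0,1}. Assume G_f^{(ν)}(k) ≠ 0 for some integer k ≥ 1 and let k_ν be the least such k. For each integer n ≥ 0 set C_n := (−1)^(n+1) · (M^(2n+ν)/(2n+ν+1)) · ∑_{m=1}^{M} f(m) · B_{2n+ν+1}(m/M). Then C_n / [ (−1)^ν · (M/(2π))^(2n+ν+1) · G_f^{(ν)}(k_ν) · (2n+ν)! / (k_ν^(2n+ν+1) · √M) ] → 1 as n → ∞. -/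
/-!
Inserting the Fourier expansion of the Bernoulli polynomials on `[0, 1]` into `C_n` expresses it, up
to an explicit factor, as the Dirichlet series `∑ G_f^{(ν)}(k) / k ^ s` at `s = 2 n + ν + 1`. Its
coefficients are bounded, so as `s → ∞` the first nonzero term dominates the series.
-/

/-- The Fourier coefficient `G_f^{(ν)}(k)` of a function `f : ℤ → ℝ` of period `M`. -/
noncomputable def Gf (M : ℕ) (f : ℤ → ℝ) (ν : ℕ) (k : ℕ) : ℝ :=
  if ν = 0 then
    (2 / Real.sqrt M) * ∑ m ∈ Finset.range M, f m * Real.sin (2 * Real.pi * m * k / M)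
  else
    (2 / Real.sqrt M) * ∑ m ∈ Finset.range M, f m * Real.cos (2 * Real.pi * m * k / M)

/-- `C_n = (−1)^(n+1) (M^(2n+ν)/(2n+ν+1)) ∑_{m=1}^M f(m) B_{2n+ν+1}(m/M)`. -/
noncomputable def Cf (M : ℕ) (f : ℤ → ℝ) (ν : ℕ) (n : ℕ) : ℝ :=
  (-1) ^ (n + 1) * ((M : ℝ) ^ (2 * n + ν) / (2 * n + ν + 1)) *
    ∑ m ∈ Finset.Icc 1 M,
      f m * (((Polynomial.bernoulli (2 * n + ν + 1)).eval ((m : ℚ) / (M : ℚ)) : ℚ) : ℝ)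

/-- `D_n = b^(−n) ∑_{k=0}^n C(n,k) a^(n−k) C_k`. -/
noncomputable def Df (M : ℕ) (f : ℤ → ℝ) (ν a b : ℕ) (n : ℕ) : ℝ :=
  ((b : ℝ) ^ n)⁻¹ *
    ∑ k ∈ Finset.range (n + 1), (n.choose k : ℝ) * (a : ℝ) ^ (n - k) * Cf M f ν k

/-- The unsigned Stirling number of the first kind `s(n,j)`: the coefficient of `X^j`
in `X (X+1) (X+2) ⋯ (X+n−1)`. -/
noncomputable def stirling1 (n j : ℕ) : ℝ :=
  (∏ i ∈ Finset.range n, (Polynomial.X + Polynomial.C (i : ℝ))).coeff j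

/-- `ξ(0) = D_0` and `ξ(n) = (1/n!) ∑_{m=0}^{n−1} s(n, n−m) D_{n−m}` for `n ≥ 1`. -/
noncomputable def xif (M : ℕ) (f : ℤ → ℝ) (ν a b : ℕ) : ℕ → ℝ
  | 0 => Df M f ν a b 0
  | n + 1 => (1 / ((n + 1).factorial : ℝ)) *
      ∑ m ∈ Finset.range (n + 1), stirling1 (n + 1) (n + 1 - m) * Df M f ν a b (n + 1 - m)

open Real Filter Topology

lemma sum_Icc_one_eq_sum_range {α : Type*} [AddCommMonoid α] [IsRightCancelAdd α] {g : ℕ → α}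
    {M : ℕ} (hg : g M = g 0) : ∑ m ∈ Finset.Icc 1 M, g m = ∑ m ∈ Finset.range M, g m := by
  have hshift : ∑ m ∈ Finset.Icc 1 M, g m = ∑ m ∈ Finset.range M, g (m + 1) := by
    rw [Finset.range_eq_Ico, Finset.sum_Ico_add' g 0 M 1]
    rfl
  rw [hshift]
  apply add_right_cancel (b := g 0)
  rw [← Finset.sum_range_succ', Finset.sum_range_succ, hg]

lemma ratCast_eval_bernoulli (N : ℕ) (q : ℚ) :
    (((Polynomial.bernoulli N).eval q : ℚ) : ℝ) = bernoulliFun N q := by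
  rw [bernoulliFun, Polynomial.eval_map_algebraMap]
  exact (Polynomial.aeval_algebraMap_apply_eq_algebraMap_eval q _).symm

/-- The kernel of `Gf`, as a function of the parity `ν`: the sine if `ν = 0`, the cosine
otherwise. -/
noncomputable def parityTrig (ν : ℕ) (x : ℝ) : ℝ := if ν = 0 then sin x else cos x

lemma abs_parityTrig_le_one (ν : ℕ) (x : ℝ) : |parityTrig ν x| ≤ 1 := by
  unfold parityTrig
  split_ifs
  exacts [abs_sin_le_one x, abs_cos_le_one x]

lemma hasSum_one_div_nat_pow_mul_parityTrig {ν n : ℕ} (hν : ν = 0 ∨ ν = 1) (hn : n ≠ 0) {x : ℝ}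
    (hx : x ∈ Set.Icc (0 : ℝ) 1) :
    HasSum (fun k : ℕ => 1 / (k : ℝ) ^ (2 * n + ν + 1) * parityTrig ν (2 * π * k * x))
      ((-1) ^ (n + ν + 1) * (2 * π) ^ (2 * n + ν + 1) / 2 / (2 * n + ν + 1).factorial *
        bernoulliFun (2 * n + ν + 1) x) := by
  rcases hν with rfl | rfl
  · exact hasSum_one_div_nat_pow_mul_sin hn hx
  · exact hasSum_one_div_nat_pow_mul_cos n.succ_ne_zero hx

lemma tendsto_pow_mul_LSeries_natCast {a : ℕ → ℂ} {k₀ : ℕ} (hk₀ : k₀ ≠ 0)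
    (hmin : ∀ j ≠ 0, j < k₀ → a j = 0) (ha : LSeries.abscissaOfAbsConv a < ⊤) :
    Tendsto (fun s : ℕ => (k₀ : ℂ) ^ s * LSeries a s) atTop (𝓝 (a k₀)) := by
  obtain ⟨n, rfl⟩ := Nat.exists_eq_succ_of_ne_zero hk₀
  -- `a 0` does not enter the L-series, but `LSeries.tendsto_cpow_mul_atTop` requires it to vanish.
  let b : ℕ → ℂ := Function.update a 0 0
  have hab {k : ℕ} (hk : k ≠ 0) : a k = b k := (Function.update_of_ne hk _ _).symm
  have hb (m : ℕ) (hm : m ≤ n) : b m = 0 := by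
    rcases eq_or_ne m 0 with rfl | hm0
    · exact Function.update_self ..
    · rw [← hab hm0, hmin m hm0 (Nat.lt_succ_of_le hm)]
  have hlim := (LSeries.tendsto_cpow_mul_atTop hb
    (LSeries.abscissaOfAbsConv_congr hab ▸ ha)).comp tendsto_natCast_atTop_atTop
  rw [← hab n.succ_ne_zero] at hlim
  refine hlim.congr fun s => ?_
  simp [LSeries_congr hab]

lemma LSeries_ofReal_natCast (a : ℕ → ℝ) {s : ℕ} (hs : s ≠ 0) :
    LSeries (fun k => (a k : ℂ)) s = ((∑' k : ℕ, a k / (k : ℝ) ^ s : ℝ) : ℂ) := by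
  rw [LSeries, Complex.ofReal_tsum]
  refine tsum_congr fun k => ?_
  rw [LSeries.term_of_ne_zero' (Nat.cast_ne_zero.2 hs)]
  push_cast
  rw [Complex.cpow_natCast]

lemma tendsto_pow_mul_tsum_div_pow {a : ℕ → ℝ} {k₀ : ℕ} (hk₀ : k₀ ≠ 0)
    (hmin : ∀ j ≠ 0, j < k₀ → a j = 0)
    (ha : LSeries.abscissaOfAbsConv (fun k => (a k : ℂ)) < ⊤) :
    Tendsto (fun s : ℕ => (k₀ : ℝ) ^ s * ∑' k : ℕ, a k / (k : ℝ) ^ s) atTop (𝓝 (a k₀)) := by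
  have hlim := tendsto_pow_mul_LSeries_natCast hk₀
    (fun j hj hlt => by rw [hmin j hj hlt, Complex.ofReal_zero]) ha
  refine tendsto_ofReal_iff.1 (hlim.congr' ?_)
  filter_upwards [eventually_ne_atTop 0] with s hs
  rw [LSeries_ofReal_natCast a hs]
  push_cast
  rfl

section FourierExpansion

variable (M : ℕ) (f : ℤ → ℝ) (ν : ℕ)

lemma Gf_eq_sum_parityTrig (k : ℕ) :
    Gf M f ν k = 2 / √M * ∑ m ∈ Finset.range M, f m * parityTrig ν (2 * π * k * (m / M)) := by
  have hangle (m : ℕ) : 2 * π * m * k / M = 2 * π * k * (m / M) := by ring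
  simp only [Gf, parityTrig, hangle]
  split_ifs <;> rfl

lemma abs_Gf_le (k : ℕ) : |Gf M f ν k| ≤ 2 / √M * ∑ m ∈ Finset.range M, |f m| := by
  rw [Gf_eq_sum_parityTrig, abs_mul, abs_of_nonneg (by positivity)]
  gcongr
  refine (Finset.abs_sum_le_sum_abs _ _).trans (Finset.sum_le_sum fun m _ => ?_)
  rw [abs_mul]
  exact mul_le_of_le_one_right (abs_nonneg _) (abs_parityTrig_le_one _ _)

lemma abscissaOfAbsConv_Gf_lt_top :
    LSeries.abscissaOfAbsConv (fun k => (Gf M f ν k : ℂ)) < ⊤ := by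
  refine (LSeries.abscissaOfAbsConv_le_of_le_const
    ⟨2 / √M * ∑ m ∈ Finset.range M, |f m|, fun k _ => ?_⟩).trans_lt (EReal.coe_lt_top 1)
  rw [Complex.norm_real]
  exact abs_Gf_le M f ν k

variable {M f ν}

lemma Cf_eq_sum_bernoulliFun (hM : M ≠ 0) (hf : f M = f 0) {n : ℕ} (hn : n ≠ 0) :
    Cf M f ν n = (-1) ^ (n + 1) * ((M : ℝ) ^ (2 * n + ν) / (2 * n + ν + 1)) *
      ∑ m ∈ Finset.range M, f m * bernoulliFun (2 * n + ν + 1) (m / M) := by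
  have hperiod : f M * bernoulliFun (2 * n + ν + 1) (M / M) =
      f (0 : ℕ) * bernoulliFun (2 * n + ν + 1) ((0 : ℕ) / M) := by
    rw [div_self (by exact_mod_cast hM), Nat.cast_zero, Nat.cast_zero, zero_div, hf,
      bernoulliFun_endpoints_eq_of_ne_one (by omega)]
  rw [← sum_Icc_one_eq_sum_range hperiod, Cf]
  simp only [ratCast_eval_bernoulli, Rat.cast_div, Rat.cast_natCast]

lemma hasSum_Gf_div_pow (hν : ν = 0 ∨ ν = 1) {n : ℕ} (hn : n ≠ 0) :
    HasSum (fun k : ℕ => Gf M f ν k / (k : ℝ) ^ (2 * n + ν + 1))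
      ((-1) ^ (n + ν + 1) * (2 * π) ^ (2 * n + ν + 1) / (√M * (2 * n + ν + 1).factorial) *
        ∑ m ∈ Finset.range M, f m * bernoulliFun (2 * n + ν + 1) (m / M)) := by
  have hterm (m : ℕ) (hm : m ∈ Finset.range M) := (hasSum_one_div_nat_pow_mul_parityTrig hν hn
    (unitInterval.div_mem (Nat.cast_nonneg m) (Nat.cast_nonneg M)
      (Nat.cast_le.2 (Finset.mem_range.1 hm).le))).mul_left (f m)
  convert! (hasSum_sum hterm).mul_left (2 / √M) using 1
  · funext k
    rw [Gf_eq_sum_parityTrig, mul_div_assoc, Finset.sum_div]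
    congr! 2
    ring
  · simp only [Finset.mul_sum]
    congr! 1
    ring

lemma Cf_eq_mul_tsum_Gf_div_pow (hM : M ≠ 0) (hf : f M = f 0) (hν : ν = 0 ∨ ν = 1) {n : ℕ}
    (hn : n ≠ 0) :
    Cf M f ν n = (-1) ^ ν * (M / (2 * π)) ^ (2 * n + ν + 1) * (2 * n + ν).factorial / √M *
      ∑' k : ℕ, Gf M f ν k / (k : ℝ) ^ (2 * n + ν + 1) := by
  have hsqrt : √M ^ 2 = (M : ℝ) := sq_sqrt (Nat.cast_nonneg M)
  have hsign : ((-1 : ℝ) ^ ν) ^ 2 = 1 := by rw [← pow_mul, mul_comm, pow_mul, neg_one_sq, one_pow]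
  rw [Cf_eq_sum_bernoulliFun hM hf hn, (hasSum_Gf_div_pow hν hn).tsum_eq, Nat.factorial_succ,
    div_pow, pow_succ (M : ℝ), add_right_comm n ν 1, pow_add (-1 : ℝ) (n + 1) ν]
  push_cast
  field_simp
  rw [hsqrt, hsign]
  field_simp

end FourierExpansion

/-- `C_n ~ (−1)^ν (M/(2π))^(2n+ν+1) G_f^{(ν)}(k_ν) (2n+ν)!/(k_ν^(2n+ν+1) √M)`
as `n → ∞`, where `k_ν` is the least `k ≥ 1` with `G_f^{(ν)}(k) ≠ 0`. -/
theorem Cf_asymptotic (M : ℕ) (hM : 2 ≤ M) (f : ℤ → ℝ)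
    (hf : ∀ n : ℤ, f (n + M) = f n) (ν : ℕ) (hν : ν = 0 ∨ ν = 1)
    (kν : ℕ) (hkν : 1 ≤ kν) (hG : Gf M f ν kν ≠ 0)
    (hmin : ∀ j : ℕ, 1 ≤ j → j < kν → Gf M f ν j = 0) :
    Filter.Tendsto
      (fun n : ℕ => Cf M f ν n /
        ((-1) ^ ν * ((M : ℝ) / (2 * Real.pi)) ^ (2 * n + ν + 1) * Gf M f ν kν *
          ((2 * n + ν).factorial : ℝ) / ((kν : ℝ) ^ (2 * n + ν + 1) * Real.sqrt M)))
      Filter.atTop (nhds 1) := by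
  have hM0 : M ≠ 0 := by omega
  have hfM : f M = f 0 := by simpa using hf 0
  have hindex : Tendsto (fun n : ℕ => 2 * n + ν + 1) atTop atTop :=
    tendsto_atTop_mono (fun n => by dsimp only [id]; omega) tendsto_id
  have hlead : Tendsto (fun s : ℕ => (kν : ℝ) ^ s * ∑' k : ℕ, Gf M f ν k / (k : ℝ) ^ s) atTop
      (𝓝 (Gf M f ν kν)) :=
    tendsto_pow_mul_tsum_div_pow (Nat.one_le_iff_ne_zero.1 hkν)
      (fun j hj => hmin j (Nat.one_le_iff_ne_zero.2 hj)) (abscissaOfAbsConv_Gf_lt_top M f ν)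
  have hratio := (hlead.comp hindex).div_const (Gf M f ν kν)
  rw [div_self hG] at hratio
  refine hratio.congr' ?_
  filter_upwards [eventually_ne_atTop 0] with n hn
  rw [Cf_eq_mul_tsum_Gf_div_pow hM0 hfM hν hn, Function.comp_apply]
  field_simp
end

section
/- For every integer t ≥ 1, (2/√(3·2^(t+1))) · ∑_{m=0}^{3·2^(t+1)−1} χ_t(m) · cos(2πm/(3·2^(t+1))) = −(1/√(2^(t−1))) · sin(π/2^t). -/
/-- The periodic function `χ_t` of period `3·2^(t+1)` from the strange identity for the
Kontsevich–Zagier series of the torus knot `T(3, 2^t)`. -/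
noncomputable def chiT (t : ℕ) (n : ℤ) : ℝ :=
  if n % (3 * 2 ^ (t + 1)) = (2 ^ (t + 1) - 3) % (3 * 2 ^ (t + 1)) ∨
      n % (3 * 2 ^ (t + 1)) = (2 ^ (t + 2) + 3) % (3 * 2 ^ (t + 1)) then -(1 / 2)
  else if n % (3 * 2 ^ (t + 1)) = (2 ^ (t + 1) + 3) % (3 * 2 ^ (t + 1)) ∨
      n % (3 * 2 ^ (t + 1)) = (2 ^ (t + 2) - 3) % (3 * 2 ^ (t + 1)) then 1 / 2
  else 0

/-!
The function `χ_t` is supported on the four residues `±(M ± 3)` modulo the period `3M`, where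
`M = 2^(t+1)`, and both `χ_t` and the cosine are even. The sum therefore collapses to
`cos (2π/3 + x) - cos (2π/3 - x) = -√3 sin x` with `x = 2π · 3 / (3M) = π / 2^t`, and the factor
`√3` cancels against the one in the normalisation `2 / √(3M)`.
-/

open Real

theorem sum_range_ite_intCast_eq_mul {R : Type*} [NonUnitalNonAssocSemiring R] {N : ℕ} {a : ℤ}
    (ha₀ : 0 ≤ a) (haN : a < N) (c : R) (f : ℤ → R) :
    ∑ m ∈ Finset.range N, (if (m : ℤ) = a then c else 0) * f m = c * f a := by
  lift a to ℕ using ha₀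
  simp [ite_mul, Int.ofNat_lt.mp haN]

theorem chiT_eq_ite_add_ite {t : ℕ} (ht : 1 ≤ t) {n : ℤ} (hn₀ : 0 ≤ n)
    (hn : n < 3 * 2 ^ (t + 1)) :
    chiT t n = (if n = 2 ^ (t + 1) + 3 then 1 / 2 else 0)
      + (if n = 2 ^ (t + 2) - 3 then 1 / 2 else 0)
      + (if n = 2 ^ (t + 1) - 3 then -(1 / 2) else 0)
      + (if n = 2 ^ (t + 2) + 3 then -(1 / 2) else 0) := by
  have hpow : (2 : ℤ) ^ (t + 2) = 2 * 2 ^ (t + 1) := by ring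
  -- Divisibility by `4` excludes `2 ^ (t + 1) = 6`, where two of the four residues coincide.
  have hdvd : (4 : ℤ) ∣ 2 ^ (t + 1) := pow_dvd_pow 2 (Nat.succ_le_succ ht)
  have hfour : (4 : ℤ) ≤ 2 ^ (t + 1) := Int.le_of_dvd (by positivity) hdvd
  unfold chiT
  rw [hpow]
  generalize (2 : ℤ) ^ (t + 1) = M at *
  rw [Int.emod_eq_of_lt hn₀ hn,
    Int.emod_eq_of_lt (a := M - 3) (by omega) (by omega),
    Int.emod_eq_of_lt (a := 2 * M + 3) (by omega) (by omega),
    Int.emod_eq_of_lt (a := M + 3) (by omega) (by omega),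
    Int.emod_eq_of_lt (a := 2 * M - 3) (by omega) (by omega)]
  split_ifs <;> first | omega | norm_num

theorem sum_range_chiT_mul {t : ℕ} (ht : 1 ≤ t) (f : ℤ → ℝ) :
    ∑ m ∈ Finset.range (3 * 2 ^ (t + 1)), chiT t m * f m
      = (f (2 ^ (t + 1) + 3) + f (2 ^ (t + 2) - 3)
          - f (2 ^ (t + 1) - 3) - f (2 ^ (t + 2) + 3)) / 2 := by
  have hpow : (2 : ℤ) ^ (t + 2) = 2 * 2 ^ (t + 1) := by ring
  have hfour : (4 : ℤ) ≤ 2 ^ (t + 1) :=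
    Int.le_of_dvd (by positivity) (pow_dvd_pow 2 (Nat.succ_le_succ ht))
  have hchi : ∀ m ∈ Finset.range (3 * 2 ^ (t + 1)), chiT t m * f m = _ := fun m hm ↦
    congrArg (· * f m) <|
      chiT_eq_ite_add_ite ht m.cast_nonneg (by exact_mod_cast Finset.mem_range.mp hm)
  rw [Finset.sum_congr rfl hchi]
  simp only [add_mul, Finset.sum_add_distrib]
  repeat rw [sum_range_ite_intCast_eq_mul (by omega) (by push_cast; omega)]
  ring

theorem sum_range_chiT_mul_of_symm {t : ℕ} (ht : 1 ≤ t) {f : ℤ → ℝ}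
    (hf : ∀ n, f (3 * 2 ^ (t + 1) - n) = f n) :
    ∑ m ∈ Finset.range (3 * 2 ^ (t + 1)), chiT t m * f m
      = f (2 ^ (t + 1) + 3) - f (2 ^ (t + 1) - 3) := by
  have hsub : f (2 ^ (t + 2) - 3) = f (2 ^ (t + 1) + 3) := by
    rw [← hf]
    congr 1
    ring
  have hadd : f (2 ^ (t + 2) + 3) = f (2 ^ (t + 1) - 3) := by
    rw [← hf]
    congr 1
    ring
  rw [sum_range_chiT_mul ht, hsub, hadd]
  ring

theorem cos_two_pi_mul_sub_div_self {N : ℝ} (hN : N ≠ 0) (x : ℝ) :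
    cos (2 * π * (N - x) / N) = cos (2 * π * x / N) := by
  rw [mul_sub, sub_div, mul_div_cancel_right₀ _ hN, cos_two_pi_sub]

theorem cos_two_pi_div_three_add_sub_cos_sub (x : ℝ) :
    cos (2 * π / 3 + x) - cos (2 * π / 3 - x) = -(√3 * sin x) := by
  have hsin : sin (2 * π / 3) = √3 / 2 := by
    rw [show 2 * π / 3 = π - π / 3 by ring, sin_pi_sub, sin_pi_div_three]
  rw [cos_add, cos_sub, hsin]
  ring

theorem sum_range_chiT_mul_cos {t : ℕ} (ht : 1 ≤ t) :
    ∑ m ∈ Finset.range (3 * 2 ^ (t + 1)), chiT t m * cos (2 * π * m / (3 * 2 ^ (t + 1)))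
      = -(√3 * sin (π / 2 ^ t)) := by
  let f : ℤ → ℝ := fun n ↦ cos (2 * π * n / (3 * 2 ^ (t + 1)))
  have hsymm (n : ℤ) : f (3 * 2 ^ (t + 1) - n) = f n := by
    simpa [f] using cos_two_pi_mul_sub_div_self (N := 3 * 2 ^ (t + 1)) (by positivity) n
  have hadd : 2 * π * (2 ^ (t + 1) + 3) / (3 * 2 ^ (t + 1)) = 2 * π / 3 + π / 2 ^ t := by
    field_simp
    ring
  have hsub : 2 * π * (2 ^ (t + 1) - 3) / (3 * 2 ^ (t + 1)) = 2 * π / 3 - π / 2 ^ t := by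
    field_simp
    ring
  have hsum := sum_range_chiT_mul_of_symm ht hsymm
  simp only [f] at hsum
  push_cast at hsum
  rw [hsum, hadd, hsub, cos_two_pi_div_three_add_sub_cos_sub]

theorem sqrt_three_mul_two_pow_add_one {t : ℕ} (ht : 1 ≤ t) :
    √(3 * 2 ^ (t + 1)) = 2 * √3 * √(2 ^ (t - 1)) := by
  obtain ⟨s, rfl⟩ := Nat.exists_eq_add_of_le' ht
  rw [Nat.add_sub_cancel, show (3 : ℝ) * 2 ^ (s + 1 + 1) = 2 ^ 2 * 3 * 2 ^ s by ring,
    sqrt_mul (by positivity), sqrt_mul (by positivity), sqrt_sq zero_le_two]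

/-- `G_{χ_t}^{(1)}(1) = −(1/√(2^(t−1))) sin(π/2^t)` for every `t ≥ 1`. -/
theorem G_chiT_one (t : ℕ) (ht : 1 ≤ t) :
    (2 / Real.sqrt (3 * 2 ^ (t + 1))) *
        ∑ m ∈ Finset.range (3 * 2 ^ (t + 1)),
          chiT t m * Real.cos (2 * Real.pi * m / (3 * 2 ^ (t + 1)))
      = -(1 / Real.sqrt (2 ^ (t - 1))) * Real.sin (Real.pi / 2 ^ t) := by
  rw [sum_range_chiT_mul_cos ht, sqrt_three_mul_two_pow_add_one ht]
  field_simp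
end

section
/- For all integers m ≥ 1 and 0 ≤ ℓ ≤ m−1, (2/√(8m+4)) · ∑_{j=0}^{8m+3} χ_m^{(ℓ)}(j) · cos(2πj/(8m+4)) = −(2/√(2m+1)) · sin(π(ℓ+1)/(2m+1)). -/
/-- The periodic function `χ_m^{(ℓ)}` of period `8m+4` from Hikami's strange identity for
the Kontsevich–Zagier series of the torus knot `T(2, 2m+1)`. -/
noncomputable def chiX (m ℓ : ℕ) (n : ℤ) : ℝ :=
  if n % (8 * m + 4) = (2 * m - 2 * ℓ - 1) % (8 * m + 4) ∨
      n % (8 * m + 4) = (6 * m + 2 * ℓ + 5) % (8 * m + 4) then -(1 / 2)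
  else if n % (8 * m + 4) = (2 * m + 2 * ℓ + 3) % (8 * m + 4) ∨
      n % (8 * m + 4) = (6 * m - 2 * ℓ + 1) % (8 * m + 4) then 1 / 2
  else 0

/-!
The four residues in the support of `χ_m^{(ℓ)}` are `q ± 2k` and `3q ± 2k` modulo `4q`, where
`q = 2m + 1` and `k = ℓ + 1`. At these the angle `2πn / 4q` is `π/2 ± πk/q` or `3π/2 ± πk/q`, so the
cosine is `± sin (πk/q)`, with sign opposite to that of `χ_m^{(ℓ)}`. The residues are distinct
unless `q ∣ k`, and then `sin (πk/q) = 0` makes every term of the sum vanish.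
-/

open Finset Real

theorem eq_of_modEq_of_periodic {α : Type*} {N : ℤ} {f : ℤ → α} (hf : Function.Periodic f N)
    {a b : ℤ} (hab : a ≡ b [ZMOD N]) : f a = f b := by
  obtain ⟨t, rfl⟩ := Int.modEq_iff_add_fac.mp hab
  rw [mul_comm, ← smul_eq_mul, hf.zsmul t]

theorem sum_range_ite_modEq_of_periodic {M : Type*} [AddCommMonoid M] {N : ℕ} (hN : N ≠ 0)
    {f : ℤ → M} (hf : Function.Periodic f N) (r : ℤ) :
    ∑ j ∈ range N, (if (j : ℤ) ≡ r [ZMOD N] then f j else 0) = f r := by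
  have hN' : (0 : ℤ) < N := by positivity
  obtain ⟨s, hs⟩ := Int.eq_ofNat_of_zero_le (Int.emod_nonneg r hN'.ne')
  have hsN : s < N := by exact_mod_cast hs ▸ Int.emod_lt_of_pos r hN'
  have modEq_iff : ∀ j ∈ range N, ((j : ℤ) ≡ r [ZMOD N] ↔ j = s) := fun j hj ↦ by
    rw [Int.ModEq, hs, Int.emod_eq_of_lt (by positivity) (by exact_mod_cast mem_range.mp hj),
      Nat.cast_inj]
  calc ∑ j ∈ range N, (if (j : ℤ) ≡ r [ZMOD N] then f j else 0)
      = ∑ j ∈ range N, (if j = s then f j else 0) :=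
        sum_congr rfl fun j hj ↦ by simp only [modEq_iff j hj]
    _ = f s := by rw [sum_ite_eq', if_pos (mem_range.mpr hsN)]
    _ = f r := eq_of_modEq_of_periodic hf ((modEq_iff s (mem_range.mpr hsN)).mpr rfl)

theorem periodic_cos_two_pi_mul_div {N : ℕ} (hN : N ≠ 0) :
    Function.Periodic (fun n : ℤ ↦ cos (2 * π * n / N)) N := fun n ↦ by
  have angle_eq : 2 * π * ((n + N : ℤ) : ℝ) / N = 2 * π * n / N + 2 * π := by
    push_cast
    field_simp
  simp only [angle_eq, cos_add_two_pi]

theorem cos_two_pi_mul_sub_div {q : ℝ} (hq : q ≠ 0) (k : ℝ) :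
    cos (2 * π * (q - 2 * k) / (4 * q)) = sin (π * k / q) := by
  have angle_eq : 2 * π * (q - 2 * k) / (4 * q) = π / 2 - π * k / q := by
    field_simp
    ring
  rw [angle_eq, cos_pi_div_two_sub]

theorem cos_two_pi_mul_add_div {q : ℝ} (hq : q ≠ 0) (k : ℝ) :
    cos (2 * π * (q + 2 * k) / (4 * q)) = -sin (π * k / q) := by
  simpa [neg_div] using cos_two_pi_mul_sub_div hq (-k)

theorem cos_two_pi_mul_three_mul_add_div {q : ℝ} (hq : q ≠ 0) (k : ℝ) :
    cos (2 * π * (3 * q + 2 * k) / (4 * q)) = sin (π * k / q) := by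
  have angle_eq : 2 * π * (3 * q + 2 * k) / (4 * q) = 2 * π * (q + 2 * k) / (4 * q) + π := by
    field_simp
    ring
  rw [angle_eq, cos_add_pi, cos_two_pi_mul_add_div hq, neg_neg]

theorem cos_two_pi_mul_three_mul_sub_div {q : ℝ} (hq : q ≠ 0) (k : ℝ) :
    cos (2 * π * (3 * q - 2 * k) / (4 * q)) = -sin (π * k / q) := by
  simpa [neg_div, sub_eq_add_neg] using cos_two_pi_mul_three_mul_add_div hq (-k)

theorem sin_pi_mul_div_eq_zero_of_dvd {q k : ℕ} (hqk : q ∣ k) : sin (π * k / q) = 0 := by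
  obtain ⟨t, rfl⟩ := hqk
  rcases eq_or_ne q 0 with rfl | hq
  · simp
  · have angle_eq : π * ((q * t : ℕ) : ℝ) / q = t * π := by
      push_cast
      field_simp
    rw [angle_eq, sin_nat_mul_pi]

theorem not_modEq_mul_of_not_dvd_sub {c q a b : ℤ} (h : ¬c ∣ b - a) : ¬a ≡ b [ZMOD c * q] :=
  fun hab ↦ h (dvd_of_mul_right_dvd hab.dvd)

theorem not_modEq_mul_of_sub_eq_mul {c q k a b : ℤ} (hc : c ≠ 0) (hqk : ¬q ∣ k)
    (hab : b - a = c * k) : ¬a ≡ b [ZMOD c * q] :=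
  fun h ↦ hqk ((mul_dvd_mul_iff_left hc).mp (hab ▸ h.dvd))

section ChiX

variable {m ℓ : ℕ}

theorem chiX_eq_ite_modEq (n : ℤ) :
    chiX m ℓ n =
      if n ≡ 2 * m - 2 * ℓ - 1 [ZMOD 8 * m + 4] ∨ n ≡ 6 * m + 2 * ℓ + 5 [ZMOD 8 * m + 4] then
        -(1 / 2)
      else if n ≡ 2 * m + 2 * ℓ + 3 [ZMOD 8 * m + 4] ∨ n ≡ 6 * m - 2 * ℓ + 1 [ZMOD 8 * m + 4] then
        1 / 2
      else 0 :=
  rfl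

theorem chiX_eq_of_not_dvd (hℓ : ¬2 * m + 1 ∣ ℓ + 1) (n : ℤ) :
    chiX m ℓ n =
      ((if n ≡ 2 * m + 2 * ℓ + 3 [ZMOD 8 * m + 4] then 1 else 0)
        + (if n ≡ 6 * m - 2 * ℓ + 1 [ZMOD 8 * m + 4] then 1 else 0)
        - (if n ≡ 2 * m - 2 * ℓ - 1 [ZMOD 8 * m + 4] then 1 else 0)
        - (if n ≡ 6 * m + 2 * ℓ + 5 [ZMOD 8 * m + 4] then 1 else 0)) / 2 := by
  have period_eq : (8 * m + 4 : ℤ) = 4 * (2 * m + 1) := by ring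
  have hℓ' : ¬(2 * m + 1 : ℤ) ∣ ℓ + 1 := mod_cast hℓ
  have disjoint_of_not_dvd {a b : ℤ} (h : ¬4 ∣ b - a) :
      ¬(n ≡ a [ZMOD 8 * m + 4] ∧ n ≡ b [ZMOD 8 * m + 4]) := fun ⟨ha, hb⟩ ↦
    not_modEq_mul_of_not_dvd_sub h (period_eq ▸ ha.symm.trans hb)
  have disjoint_of_sub_eq {a b : ℤ} (h : b - a = 4 * (ℓ + 1)) :
      ¬(n ≡ a [ZMOD 8 * m + 4] ∧ n ≡ b [ZMOD 8 * m + 4]) := fun ⟨ha, hb⟩ ↦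
    not_modEq_mul_of_sub_eq_mul four_ne_zero hℓ' h (period_eq ▸ ha.symm.trans hb)
  have disj₁₂ := disjoint_of_not_dvd (a := 2 * m - 2 * ℓ - 1) (b := 6 * m + 2 * ℓ + 5) (by omega)
  have disj₁₃ := disjoint_of_sub_eq (a := 2 * m - 2 * ℓ - 1) (b := 2 * m + 2 * ℓ + 3) (by ring)
  have disj₁₄ := disjoint_of_not_dvd (a := 2 * m - 2 * ℓ - 1) (b := 6 * m - 2 * ℓ + 1) (by omega)
  have disj₂₃ := disjoint_of_not_dvd (a := 6 * m + 2 * ℓ + 5) (b := 2 * m + 2 * ℓ + 3) (by omega)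
  have disj₄₂ := disjoint_of_sub_eq (a := 6 * m - 2 * ℓ + 1) (b := 6 * m + 2 * ℓ + 5) (by ring)
  have disj₃₄ := disjoint_of_not_dvd (a := 2 * m + 2 * ℓ + 3) (b := 6 * m - 2 * ℓ + 1) (by omega)
  rw [chiX_eq_ite_modEq]
  grind

theorem sum_chiX_mul_of_not_dvd (hℓ : ¬2 * m + 1 ∣ ℓ + 1) {f : ℤ → ℝ}
    (hf : Function.Periodic f (8 * m + 4)) :
    ∑ j ∈ range (8 * m + 4), chiX m ℓ j * f j =
      (f (2 * m + 2 * ℓ + 3) + f (6 * m - 2 * ℓ + 1)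
        - f (2 * m - 2 * ℓ - 1) - f (6 * m + 2 * ℓ + 5)) / 2 := by
  have sum_ite_modEq (r : ℤ) :
      ∑ j ∈ range (8 * m + 4), (if (j : ℤ) ≡ r [ZMOD 8 * m + 4] then f j else 0) = f r :=
    mod_cast sum_range_ite_modEq_of_periodic (N := 8 * m + 4) (by omega) (mod_cast hf) r
  simp only [chiX_eq_of_not_dvd hℓ, div_mul_eq_mul_div, add_mul, sub_mul, ite_mul, one_mul,
    zero_mul, ← sum_div, sum_add_distrib, sum_sub_distrib, sum_ite_modEq]

theorem chiX_mul_eq_zero {f : ℤ → ℝ} (hf : Function.Periodic f (8 * m + 4))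
    (h₁ : f (2 * m - 2 * ℓ - 1) = 0) (h₂ : f (6 * m + 2 * ℓ + 5) = 0)
    (h₃ : f (2 * m + 2 * ℓ + 3) = 0) (h₄ : f (6 * m - 2 * ℓ + 1) = 0) (n : ℤ) :
    chiX m ℓ n * f n = 0 := by
  have eq_zero_of_modEq {r : ℤ} (hr : f r = 0) (hn : n ≡ r [ZMOD 8 * m + 4]) : f n = 0 :=
    (eq_of_modEq_of_periodic hf hn).trans hr
  rw [chiX_eq_ite_modEq]
  split_ifs with hneg hpos
  · rw [hneg.elim (eq_zero_of_modEq h₁) (eq_zero_of_modEq h₂), mul_zero]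
  · rw [hpos.elim (eq_zero_of_modEq h₃) (eq_zero_of_modEq h₄), mul_zero]
  · exact zero_mul _

end ChiX

theorem sum_chiX_mul_cos (m ℓ : ℕ) :
    ∑ j ∈ range (8 * m + 4), chiX m ℓ j * cos (2 * π * j / (8 * m + 4)) =
      -2 * sin (π * (ℓ + 1) / (2 * m + 1)) := by
  let f : ℤ → ℝ := fun n ↦ cos (2 * π * n / (8 * m + 4))
  set x : ℝ := π * (ℓ + 1) / (2 * m + 1)
  have hf : Function.Periodic f (8 * m + 4) := by
    simpa [f] using periodic_cos_two_pi_mul_div (N := 8 * m + 4) (by omega)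
  have hq : (2 * m + 1 : ℝ) ≠ 0 := by positivity
  have f₁ : f (2 * m - 2 * ℓ - 1) = sin x := by
    convert cos_two_pi_mul_sub_div hq (ℓ + 1) using 3 <;> push_cast <;> ring
  have f₂ : f (6 * m + 2 * ℓ + 5) = sin x := by
    convert cos_two_pi_mul_three_mul_add_div hq (ℓ + 1) using 3 <;> push_cast <;> ring
  have f₃ : f (2 * m + 2 * ℓ + 3) = -sin x := by
    convert cos_two_pi_mul_add_div hq (ℓ + 1) using 3 <;> push_cast <;> ring
  have f₄ : f (6 * m - 2 * ℓ + 1) = -sin x := by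
    convert cos_two_pi_mul_three_mul_sub_div hq (ℓ + 1) using 3 <;> push_cast <;> ring
  suffices sum_eq : ∑ j ∈ range (8 * m + 4), chiX m ℓ j * f j = -2 * sin x by
    simpa only [f, Int.cast_natCast] using sum_eq
  by_cases hdvd : 2 * m + 1 ∣ ℓ + 1
  · have sin_eq_zero : sin x = 0 := by simpa [x] using sin_pi_mul_div_eq_zero_of_dvd hdvd
    rw [sin_eq_zero, mul_zero]
    rw [sin_eq_zero] at f₁ f₂
    rw [sin_eq_zero, neg_zero] at f₃ f₄
    exact sum_eq_zero fun j _ ↦ chiX_mul_eq_zero hf f₁ f₂ f₃ f₄ j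
  · rw [sum_chiX_mul_of_not_dvd hdvd hf, f₁, f₂, f₃, f₄]
    ring

theorem G_chiX_one_general (m ℓ : ℕ) :
    (2 / √(8 * m + 4)) *
        ∑ j ∈ range (8 * m + 4), chiX m ℓ j * cos (2 * π * j / (8 * m + 4))
      = -(2 / √(2 * m + 1)) * sin (π * (ℓ + 1) / (2 * m + 1)) := by
  have sqrt_eq : √(8 * m + 4 : ℝ) = 2 * √(2 * m + 1) := by
    rw [show (8 * m + 4 : ℝ) = 2 ^ 2 * (2 * m + 1) by ring, sqrt_mul (by positivity),
      sqrt_sq (by positivity)]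
  rw [sum_chiX_mul_cos, sqrt_eq]
  ring

/-- `G_{χ_m^{(ℓ)}}^{(1)}(1) = −(2/√(2m+1)) sin(π(ℓ+1)/(2m+1))` for all
`m ≥ 1` and `0 ≤ ℓ ≤ m−1`. -/
theorem G_chiX_one (m ℓ : ℕ) (hm : 1 ≤ m) (hℓ : ℓ ≤ m - 1) :
    (2 / Real.sqrt (8 * m + 4)) *
        ∑ j ∈ Finset.range (8 * m + 4),
          chiX m ℓ j * Real.cos (2 * Real.pi * j / (8 * m + 4))
      = -(2 / Real.sqrt (2 * m + 1)) * Real.sin (Real.pi * (ℓ + 1) / (2 * m + 1)) :=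
  G_chiX_one_general m ℓ
end

section
/- For all integers k ≥ 1 and ℓ ≥ 1, (2/√(4k+2)) · ∑_{m=0}^{4k+1} χ_k(m) · sin(2πmℓ/(4k+2)) = (8/√(4k+2)) · sin(πℓ/2) · cos(πℓ/(2(2k+1))). -/
/-- The odd periodic function `χ_k` of period `4k+2` with `χ_k(n) = 1` for
`n ≡ k, k+1 (mod 4k+2)`, `χ_k(n) = −1` for `n ≡ −k, −k−1 (mod 4k+2)`, and `0` otherwise. -/
noncomputable def chiK (k : ℕ) (n : ℤ) : ℝ :=
  if n % (4 * k + 2) = (k : ℤ) % (4 * k + 2) ∨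
      n % (4 * k + 2) = ((k : ℤ) + 1) % (4 * k + 2) then 1
  else if n % (4 * k + 2) = (-(k : ℤ)) % (4 * k + 2) ∨
      n % (4 * k + 2) = (-(k : ℤ) - 1) % (4 * k + 2) then -1
  else 0

/-!
Pairing a function of period `4k+2` with `χ_k` evaluates it at `k` and `k+1` with weight `1` and at
`-k` and `-k-1` with weight `-1`; if the function is also odd, the negative terms double the
positive ones. For `m ↦ sin (2πmℓ/(4k+2))` the points `k` and `k+1` give the angles `x ∓ y` with
`x = πℓ/2` and `y = πℓ/(2(2k+1))`, and `sin (x - y) + sin (x + y) = 2 sin x cos y`.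
-/

open Real Function

theorem apply_emod_of_periodic {α : Type*} {f : ℤ → α} {c : ℤ} (hf : Periodic f c) (a : ℤ) :
    f (a % c) = f a := by
  rw [Int.emod_def, mul_comm, ← smul_eq_mul, hf.sub_zsmul_eq]

theorem sum_range_ite_modEq_mul {R : Type*} [NonAssocSemiring R] {N : ℕ} (hN : N ≠ 0)
    {f : ℤ → R} (hf : Periodic f N) (a : ℤ) :
    ∑ m ∈ Finset.range N, (if (m : ℤ) ≡ a [ZMOD N] then 1 else 0) * f m = f a := by
  have hN_pos : (0 : ℤ) < N := by omega
  obtain ⟨r, hr⟩ := Int.eq_ofNat_of_zero_le (Int.emod_nonneg a hN_pos.ne')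
  have hr_lt : r < N := by exact_mod_cast hr ▸ Int.emod_lt_of_pos a hN_pos
  have modEq_iff_eq_r : ∀ m ∈ Finset.range N, (m : ℤ) ≡ a [ZMOD N] ↔ m = r := fun m hm => by
    have hm_emod : (m : ℤ) % N = m :=
      Int.emod_eq_of_lt (by omega) (by exact_mod_cast Finset.mem_range.mp hm)
    rw [Int.ModEq, hm_emod, hr, Nat.cast_inj]
  calc ∑ m ∈ Finset.range N, (if (m : ℤ) ≡ a [ZMOD N] then 1 else 0) * f m
      = ∑ m ∈ Finset.range N, if m = r then f m else 0 :=
        Finset.sum_congr rfl fun m hm => by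
          simp only [modEq_iff_eq_r m hm, ite_mul, one_mul, zero_mul]
    _ = f r := by rw [Finset.sum_ite_eq', if_pos (Finset.mem_range.mpr hr_lt)]
    _ = f a := by rw [← hr, apply_emod_of_periodic hf]

section chiK

variable {k : ℕ}

theorem chiK_eq_ite_modEq (hk : 1 ≤ k) (n : ℤ) :
    chiK k n =
      (if n ≡ k [ZMOD (4 * k + 2 : ℕ)] then 1 else 0) +
      (if n ≡ k + 1 [ZMOD (4 * k + 2 : ℕ)] then 1 else 0) -
      (if n ≡ -k [ZMOD (4 * k + 2 : ℕ)] then 1 else 0) -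
      (if n ≡ -k - 1 [ZMOD (4 * k + 2 : ℕ)] then 1 else 0) := by
  have emod_k : (k : ℤ) % (4 * k + 2) = k := Int.emod_eq_of_lt (by omega) (by omega)
  have emod_k_add_one : ((k : ℤ) + 1) % (4 * k + 2) = k + 1 :=
    Int.emod_eq_of_lt (by omega) (by omega)
  have emod_neg_k : (-(k : ℤ)) % (4 * k + 2) = 3 * k + 2 := by
    rw [← Int.add_emod_right, Int.emod_eq_of_lt (by omega) (by omega)]
    ring
  have emod_neg_k_sub_one : (-(k : ℤ) - 1) % (4 * k + 2) = 3 * k + 1 := by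
    rw [← Int.add_emod_right, Int.emod_eq_of_lt (by omega) (by omega)]
    ring
  push_cast
  simp only [chiK, Int.ModEq, emod_k, emod_k_add_one, emod_neg_k, emod_neg_k_sub_one]
  split_ifs <;> first | omega | norm_num

theorem sum_chiK_mul_of_periodic (hk : 1 ≤ k) {f : ℤ → ℝ} (hf : Periodic f (4 * k + 2 : ℕ)) :
    ∑ m ∈ Finset.range (4 * k + 2), chiK k m * f m = f k + f (k + 1) - f (-k) - f (-k - 1) := by
  simp only [chiK_eq_ite_modEq hk, sub_mul, add_mul, Finset.sum_sub_distrib,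
    Finset.sum_add_distrib, sum_range_ite_modEq_mul (Nat.succ_ne_zero _) hf]

theorem sum_chiK_mul_of_periodic_of_odd (hk : 1 ≤ k) {f : ℤ → ℝ}
    (hf : Periodic f (4 * k + 2 : ℕ)) (hodd : f.Odd) :
    ∑ m ∈ Finset.range (4 * k + 2), chiK k m * f m = 2 * (f k + f (k + 1)) := by
  have f_neg_k_sub_one : f (-k - 1) = -f (k + 1) := by rw [← hodd, neg_add']
  rw [sum_chiK_mul_of_periodic hk hf, hodd, f_neg_k_sub_one]
  ring

end chiK

theorem periodic_sin_two_pi_mul_div {N : ℕ} (hN : N ≠ 0) (ℓ : ℤ) :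
    Periodic (fun m : ℤ => sin (2 * π * m * ℓ / N)) N := fun m => by
  have angle_add_period : 2 * π * ((m + N : ℤ) : ℝ) * ℓ / N = 2 * π * m * ℓ / N + ℓ * (2 * π) := by
    push_cast
    field_simp
  simp only [angle_add_period, sin_add_int_mul_two_pi]

theorem odd_sin_two_pi_mul_div (N ℓ : ℝ) :
    (fun m : ℤ => sin (2 * π * m * ℓ / N)).Odd := fun m => by
  simp only [Int.cast_neg, mul_neg, neg_mul, neg_div, sin_neg]

theorem sum_chiK_mul_sin {k : ℕ} (hk : 1 ≤ k) (ℓ : ℤ) :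
    ∑ m ∈ Finset.range (4 * k + 2), chiK k m * sin (2 * π * m * ℓ / (4 * k + 2)) =
      4 * sin (π * ℓ / 2) * cos (π * ℓ / (2 * (2 * k + 1))) := by
  have angle_k : 2 * π * k * ℓ / (4 * k + 2) = π * ℓ / 2 - π * ℓ / (2 * (2 * k + 1)) := by
    field_simp
    ring
  have angle_k_add_one :
      2 * π * (k + 1) * ℓ / (4 * k + 2) = π * ℓ / 2 + π * ℓ / (2 * (2 * k + 1)) := by
    field_simp
    ring
  have pairing := sum_chiK_mul_of_periodic_of_odd hk
    (periodic_sin_two_pi_mul_div (N := 4 * k + 2) (Nat.succ_ne_zero _) ℓ)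
    (odd_sin_two_pi_mul_div _ ℓ)
  push_cast at pairing
  rw [pairing, angle_k, angle_k_add_one, ← two_mul_sin_mul_cos]
  ring

theorem G_chiK_general {k : ℕ} (hk : 1 ≤ k) (ℓ : ℤ) :
    (2 / √(4 * k + 2)) *
        ∑ m ∈ Finset.range (4 * k + 2), chiK k m * sin (2 * π * m * ℓ / (4 * k + 2)) =
      (8 / √(4 * k + 2)) * sin (π * ℓ / 2) * cos (π * ℓ / (2 * (2 * k + 1))) := by
  rw [sum_chiK_mul_sin hk]
  ring

/-- `G_{χ_k}^{(0)}(ℓ) = (8/√(4k+2)) sin(πℓ/2) cos(πℓ/(2(2k+1)))` for all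
`k ≥ 1` and `ℓ ≥ 1`. -/
theorem G_chiK (k ℓ : ℕ) (hk : 1 ≤ k) (hℓ : 1 ≤ ℓ) :
    (2 / Real.sqrt (4 * k + 2)) *
        ∑ m ∈ Finset.range (4 * k + 2),
          chiK k m * Real.sin (2 * Real.pi * m * ℓ / (4 * k + 2))
      = (8 / Real.sqrt (4 * k + 2)) * Real.sin (Real.pi * ℓ / 2) *
          Real.cos (Real.pi * ℓ / (2 * (2 * k + 1))) := by
  exact_mod_cast G_chiK_general hk ℓ
end

section
/- For all integers m ≥ 1 and ℓ with 0 ≤ ℓ ≤ m−1 and 4ℓ ≥ 2m−3, one has ∑_{j=2}^∞ 1/j² < sin(π(ℓ+1)/(2m+1)); equivalently, ζ(2) − 1 = π²/6 − 1 < sin(π(ℓ+1)/(2m+1)). -/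
section

open Real

theorem hasSum_one_div_add_two_sq :
    HasSum (fun j : ℕ ↦ 1 / ((j : ℝ) + 2) ^ 2) (π ^ 2 / 6 - 1) := by
  simpa [Finset.sum_range_succ] using (hasSum_nat_add_iff' 2).mpr hasSum_zeta_two

theorem pi_sq_div_six_sub_one_lt_sqrt_two_div_two : π ^ 2 / 6 - 1 < √2 / 2 := by
  have pi_sq_lt : π ^ 2 < 3.15 ^ 2 := by gcongr; exact pi_lt_d2
  have lt_sqrt_two : 1.4 < √2 := lt_sqrt_of_sq_lt (by norm_num)
  linarith

theorem sqrt_two_div_two_le_sin {x : ℝ} (hx : x ∈ Set.Icc (π / 4) (3 * π / 4)) :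
    √2 / 2 ≤ sin x := by
  have dist_le : |x - π / 2| ≤ π / 4 := abs_le.mpr ⟨by linarith [hx.1], by linarith [hx.2]⟩
  calc √2 / 2 = cos (π / 4) := cos_pi_div_four.symm
    _ ≤ cos |x - π / 2| :=
      cos_le_cos_of_nonneg_of_le_pi (abs_nonneg _) (by linarith [pi_pos]) dist_le
    _ = sin x := by rw [cos_abs, cos_sub_pi_div_two]

theorem pi_mul_div_mem_Icc {a b : ℝ} (hb : 0 < b) (hba : b ≤ 4 * a) (hab : 4 * a ≤ 3 * b) :
    π * a / b ∈ Set.Icc (π / 4) (3 * π / 4) := by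
  constructor
  · rw [div_le_div_iff₀ four_pos hb]
    linarith [mul_le_mul_of_nonneg_left hba pi_pos.le]
  · rw [div_le_div_iff₀ hb four_pos]
    linarith [mul_le_mul_of_nonneg_left hab pi_pos.le]

theorem zeta_two_lt_sin_general {x : ℝ} (hx : x ∈ Set.Icc (π / 4) (3 * π / 4)) :
    (∑' j : ℕ, 1 / ((j : ℝ) + 2) ^ 2) < sin x ∧ π ^ 2 / 6 - 1 < sin x := by
  rw [hasSum_one_div_add_two_sq.tsum_eq, and_self]
  exact pi_sq_div_six_sub_one_lt_sqrt_two_div_two.trans_le (sqrt_two_div_two_le_sin hx)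

end

/-- For integers `m ≥ 1` and `0 ≤ ℓ ≤ m−1` with `4ℓ ≥ 2m−3`,
`ζ(2) − 1 = ∑_{j=2}^∞ 1/j² = π²/6 − 1 < sin(π(ℓ+1)/(2m+1))`. -/
theorem zeta_two_lt_sin (m ℓ : ℕ) (hm : 1 ≤ m) (hℓ : ℓ ≤ m - 1) (h : 2 * m ≤ 4 * ℓ + 3) :
    (∑' j : ℕ, 1 / ((j : ℝ) + 2) ^ 2) < Real.sin (Real.pi * (ℓ + 1) / (2 * m + 1)) ∧
    Real.pi ^ 2 / 6 - 1 < Real.sin (Real.pi * (ℓ + 1) / (2 * m + 1)) := by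
  have le_four_mul : (2 * m + 1 : ℝ) ≤ 4 * (ℓ + 1) := by norm_cast; lia
  have four_mul_le : (4 * (ℓ + 1) : ℝ) ≤ 3 * (2 * m + 1) := by norm_cast; lia
  exact zeta_two_lt_sin_general (pi_mul_div_mem_Icc (by positivity) le_four_mul four_mul_le)
end

section
/- For each integer j ≥ 0 and n ≥ 1, let s(n,j) denote the coefficient of X^j in the polynomial X(X+1)(X+2)⋯(X+n−1) (the unsigned Stirling number of the first kind). Then for every fixed integer m ≥ 0: (i) s(n, n−m) · 2^m · m! / n^(2m) → 1 as n → ∞, and (ii) n · (1 − s(n, n−m) · 2^m · m! / n^(2m)) → (2m² + m)/3 as n → ∞. -/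
/-!
Iterating the recursion of the Stirling numbers gives `s(n, n-m-1) = ∑_{k<n} k s(k, k-m)`.
Faulhaber's formula, cut after two terms, shows that summation turns
`a n^(p+1) + b n^p + o(n^p)` into `a/(p+2) n^(p+2) + (b/(p+1) - a/2) n^(p+1) + o(n^(p+1))`.
Starting from `n s(n, n) = n`, induction on `m` therefore yields
`n s(n, n-m) = (n^(2m+1) - (2m²+m)/3 n^(2m)) / (2^m m!) + o(n^(2m))`,
which after division by `n^(2m) / (2^m m!)` is the second-order limit; the first-order one follows.
-/

open Filter Asymptotics Finset Topology

section PowerSums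

theorem isLittleO_natCast_pow_pow {p q : ℕ} (hpq : p < q) :
    (fun n : ℕ => (n : ℝ) ^ p) =o[atTop] fun n : ℕ => (n : ℝ) ^ q :=
  (isLittleO_pow_pow_atTop_of_lt hpq).comp_tendsto tendsto_natCast_atTop_atTop

theorem isLittleO_sum_range_pow_sub_bernoulli {r p : ℕ} (hr : r ≤ p) :
    (fun n : ℕ => ∑ k ∈ range n, (k : ℝ) ^ p -
        ∑ i ∈ range (r + 1),
          (bernoulli i : ℝ) * (p + 1).choose i * (n : ℝ) ^ (p + 1 - i) / (p + 1))
      =o[atTop] fun n : ℕ => (n : ℝ) ^ (p + 1 - r) := by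
  have faulhaber (n : ℕ) : ∑ k ∈ range n, (k : ℝ) ^ p = ∑ i ∈ range (p + 1),
      (bernoulli i : ℝ) * (p + 1).choose i * (n : ℝ) ^ (p + 1 - i) / (p + 1) := by
    exact_mod_cast congrArg (Rat.cast : ℚ → ℝ) (sum_range_pow n p)
  simp only [faulhaber, ← sum_Ico_eq_sub _ (Nat.succ_le_succ hr), mul_div_right_comm]
  refine IsLittleO.fun_sum fun i hi => (isLittleO_natCast_pow_pow ?_).const_mul_left _
  have := mem_Ico.mp hi
  lia

theorem isLittleO_sum_range_pow_sub (p : ℕ) :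
    (fun n : ℕ => ∑ k ∈ range n, (k : ℝ) ^ p - (n : ℝ) ^ (p + 1) / (p + 1))
      =o[atTop] fun n : ℕ => (n : ℝ) ^ (p + 1) := by
  simpa using isLittleO_sum_range_pow_sub_bernoulli (Nat.zero_le p)

theorem isLittleO_sum_range_pow_succ_sub (p : ℕ) :
    (fun n : ℕ => ∑ k ∈ range n, (k : ℝ) ^ (p + 1) -
        ((n : ℝ) ^ (p + 2) / (p + 2) - (n : ℝ) ^ (p + 1) / 2))
      =o[atTop] fun n : ℕ => (n : ℝ) ^ (p + 1) := by
  refine (isLittleO_sum_range_pow_sub_bernoulli (Nat.le_add_left 1 p)).congr_left fun n => ?_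
  simp only [sum_range_succ, sum_range_zero, zero_add, bernoulli_zero, bernoulli_one,
    Nat.choose_zero_right, Nat.choose_one_right, Nat.sub_zero, Nat.add_sub_cancel]
  push_cast
  field_simp
  ring

theorem isEquivalent_sum_range_pow (p : ℕ) :
    (fun n : ℕ => ∑ k ∈ range n, (k : ℝ) ^ p)
      ~[atTop] fun n : ℕ => ((p : ℝ) + 1)⁻¹ * (n : ℝ) ^ (p + 1) := by
  have : ((p : ℝ) + 1)⁻¹ ≠ 0 := by positivity
  refine ((isLittleO_const_mul_right_iff this).mpr (isLittleO_sum_range_pow_sub p)).congr_left ?_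
  exact fun n => by rw [Pi.sub_apply, div_eq_inv_mul]

theorem tendsto_sum_range_pow_atTop (p : ℕ) :
    Tendsto (fun n : ℕ => ∑ k ∈ range n, (k : ℝ) ^ p) atTop atTop := by
  refine (isEquivalent_sum_range_pow p).symm.tendsto_atTop (.const_mul_atTop (by positivity) ?_)
  exact (tendsto_pow_atTop p.succ_ne_zero).comp tendsto_natCast_atTop_atTop

theorem isLittleO_sum_range_of_isLittleO_pow {f : ℕ → ℝ} {p : ℕ}
    (hf : f =o[atTop] fun n : ℕ => (n : ℝ) ^ p) :
    (fun n => ∑ k ∈ range n, f k) =o[atTop] fun n : ℕ => (n : ℝ) ^ (p + 1) :=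
  calc (fun n => ∑ k ∈ range n, f k)
    _ =o[atTop] fun n => ∑ k ∈ range n, (k : ℝ) ^ p :=
      hf.sum_range (fun _ => by positivity) (tendsto_sum_range_pow_atTop p)
    _ =O[atTop] fun n : ℕ => ((p : ℝ) + 1)⁻¹ * (n : ℝ) ^ (p + 1) :=
      (isEquivalent_sum_range_pow p).isBigO
    _ =O[atTop] fun n : ℕ => (n : ℝ) ^ (p + 1) := isBigO_const_mul_self _ _ _

theorem isLittleO_sum_range_sub_of_two_term_expansion {f : ℕ → ℝ} {a b : ℝ} {p : ℕ}
    (hf : (fun n : ℕ => f n - (a * (n : ℝ) ^ (p + 1) + b * (n : ℝ) ^ p))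
      =o[atTop] fun n : ℕ => (n : ℝ) ^ p) :
    (fun n : ℕ => ∑ k ∈ range n, f k -
        (a / (p + 2) * (n : ℝ) ^ (p + 2) + (b / (p + 1) - a / 2) * (n : ℝ) ^ (p + 1)))
      =o[atTop] fun n : ℕ => (n : ℝ) ^ (p + 1) := by
  refine ((isLittleO_sum_range_of_isLittleO_pow hf).add
    (((isLittleO_sum_range_pow_succ_sub p).const_mul_left a).add
      ((isLittleO_sum_range_pow_sub p).const_mul_left b))).congr_left fun n => ?_
  simp only [sum_sub_distrib, sum_add_distrib, ← mul_sum]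
  ring

end PowerSums

section Stirling

theorem stirling1_self (n : ℕ) : stirling1 n n = 1 := by
  simpa [stirling1] using Polynomial.coeff_prod_of_natDegree_le (s := range n)
    (fun i : ℕ => Polynomial.X + Polynomial.C (i : ℝ)) 1 fun _ _ =>
      (Polynomial.natDegree_X_add_C _).le

theorem stirling1_zero_right {n : ℕ} (hn : n ≠ 0) : stirling1 n 0 = 0 := by
  simp only [stirling1, Polynomial.coeff_zero_prod, Polynomial.coeff_add, Polynomial.coeff_X_zero,
    Polynomial.coeff_C_zero, zero_add]
  exact prod_eq_zero (mem_range.mpr hn.pos) Nat.cast_zero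

theorem stirling1_succ_succ (n j : ℕ) :
    stirling1 (n + 1) (j + 1) = stirling1 n j + n * stirling1 n (j + 1) := by
  simp only [stirling1, prod_range_succ, mul_add, Polynomial.coeff_add, Polynomial.coeff_mul_X,
    Polynomial.coeff_mul_C]
  ring

-- For `n ≤ m` both subtractions are truncated and all three terms are `s(_, 0) = 0`.
theorem stirling1_succ_sub {n : ℕ} (hn : n ≠ 0) (m : ℕ) :
    stirling1 (n + 1) (n - m) = stirling1 n (n - (m + 1)) + n * stirling1 n (n - m) := by
  rcases lt_or_ge m n with hmn | hnm
  · obtain ⟨j, rfl⟩ := Nat.exists_eq_add_of_lt hmn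
    rw [show m + j + 1 - m = j + 1 by lia, show m + j + 1 - (m + 1) = j by lia,
      stirling1_succ_succ]
  · rw [Nat.sub_eq_zero_of_le hnm, Nat.sub_eq_zero_of_le (hnm.trans m.le_succ),
      stirling1_zero_right hn, stirling1_zero_right n.succ_ne_zero, mul_zero, add_zero]

theorem stirling1_sub_succ_eq_sum_range {n : ℕ} (hn : n ≠ 0) (m : ℕ) :
    stirling1 n (n - (m + 1)) = ∑ k ∈ range n, k * stirling1 k (k - m) := by
  induction n, Nat.one_le_iff_ne_zero.mpr hn using Nat.le_induction with
  | base => simp [stirling1_zero_right]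
  | succ n one_le ih =>
    have hn : n ≠ 0 := Nat.one_le_iff_ne_zero.mp one_le
    rw [sum_range_succ, ← ih hn, Nat.add_sub_add_right, stirling1_succ_sub hn]

theorem isLittleO_mul_stirling1_sub (m : ℕ) :
    (fun n : ℕ => n * stirling1 n (n - m) -
        ((2 ^ m * (m.factorial : ℝ))⁻¹ * (n : ℝ) ^ (2 * m + 1) +
          -((2 * (m : ℝ) ^ 2 + m) / 3) * (2 ^ m * (m.factorial : ℝ))⁻¹ * (n : ℝ) ^ (2 * m)))
      =o[atTop] fun n : ℕ => (n : ℝ) ^ (2 * m) := by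
  induction m with
  | zero => simp [stirling1_self]
  | succ m ih =>
    refine ((isBigO_refl (fun n : ℕ => (n : ℝ)) atTop).mul_isLittleO
      (isLittleO_sum_range_sub_of_two_term_expansion ih)).congr' ?_ ?_
    · filter_upwards [eventually_ne_atTop 0] with n hn
      rw [stirling1_sub_succ_eq_sum_range hn, Nat.factorial_succ]
      push_cast
      field_simp
      ring
    · exact .of_forall fun n => by ring

end Stirling

section Limits

theorem tendsto_mul_one_sub_div_of_two_term_expansion {f : ℕ → ℝ} {c β : ℝ} {p : ℕ} (hc : c ≠ 0)
    (hf : (fun n : ℕ => n * f n - (c * (n : ℝ) ^ (p + 1) + -β * c * (n : ℝ) ^ p))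
      =o[atTop] fun n : ℕ => (n : ℝ) ^ p) :
    Tendsto (fun n : ℕ => (n : ℝ) * (1 - f n / (c * (n : ℝ) ^ p))) atTop (𝓝 β) := by
  have remainder := (hf.tendsto_div_nhds_zero.const_mul c⁻¹).const_sub β
  rw [mul_zero, sub_zero] at remainder
  refine remainder.congr' ?_
  filter_upwards [eventually_ne_atTop 0] with n hn
  have : (n : ℝ) ≠ 0 := Nat.cast_ne_zero.mpr hn
  field_simp
  ring

theorem tendsto_one_of_tendsto_mul_one_sub {q : ℕ → ℝ} {β : ℝ}
    (h : Tendsto (fun n : ℕ => (n : ℝ) * (1 - q n)) atTop (𝓝 β)) : Tendsto q atTop (𝓝 1) := by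
  have quotient := (h.div_atTop tendsto_natCast_atTop_atTop).const_sub 1
  rw [sub_zero] at quotient
  refine quotient.congr' ?_
  filter_upwards [eventually_ne_atTop 0] with n hn
  rw [mul_div_cancel_left₀ _ (Nat.cast_ne_zero.mpr hn), sub_sub_cancel]

end Limits

/-- For every fixed `m ≥ 0`:
(i) `s(n, n−m) 2^m m! / n^(2m) → 1` as `n → ∞`, and
(ii) `n (1 − s(n, n−m) 2^m m! / n^(2m)) → (2m² + m)/3` as `n → ∞`. -/
theorem stirling1_asymptotic (m : ℕ) :
    Filter.Tendsto
      (fun n : ℕ => stirling1 n (n - m) * 2 ^ m * (m.factorial : ℝ) / (n : ℝ) ^ (2 * m))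
      Filter.atTop (nhds 1) ∧
    Filter.Tendsto
      (fun n : ℕ => (n : ℝ) *
        (1 - stirling1 n (n - m) * 2 ^ m * (m.factorial : ℝ) / (n : ℝ) ^ (2 * m)))
      Filter.atTop (nhds ((2 * (m : ℝ) ^ 2 + m) / 3)) := by
  have normalize (n : ℕ) :
      stirling1 n (n - m) / ((2 ^ m * (m.factorial : ℝ))⁻¹ * (n : ℝ) ^ (2 * m)) =
        stirling1 n (n - m) * 2 ^ m * (m.factorial : ℝ) / (n : ℝ) ^ (2 * m) := by
    field_simp
  have second_order := tendsto_mul_one_sub_div_of_two_term_expansion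
    (inv_ne_zero (by positivity)) (isLittleO_mul_stirling1_sub m)
  simp only [normalize] at second_order
  exact ⟨tendsto_one_of_tendsto_mul_one_sub second_order, second_order⟩
end
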